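/- Let α ∈ Δ' be irrational (α ∉ ℚ³) and exceptional, meaning that there exists α' ∈ Δ' with α' ≠ α and I(α') = I(α). Then the restriction of the shift σ to C_α has exactly two ergodic σ-invariant Borel probability measures μ₁ and μ₂; their rotation vectors ∫ κ dμ₁ and ∫ κ dμ₂ are distinct; and DF_MZ(C_α) equals the line segment with endpoints ∫ κ dμ₁ and ∫ κ dμ₂, which in turn equals the exceptional interval P_α = {α' ∈ Δ' : I(α') = I(α)}. In particular, C_α contains points whose Birkhoff digit frequency differs from ∫ κ dμ₁ (and from ∫ κ dμ₂), so μ₁ and μ₂ are lost measures. -/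

import Mathlib

open Filter Topology MeasureTheory

/-- The sequence space `Σ⁺ = {0,1,2}^ℕ` (with the product topology). -/
abbrev Seq3 := ℕ → Fin 3

/-- The shift map `σ`. -/
def shift (s : Seq3) : Seq3 := fun n => s (n + 1)

/-- The observable `κ(s) = e_{s₀}`. -/
noncomputable def kappa (s : Seq3) : Fin 3 → ℝ := fun i => if i = s 0 then 1 else 0

/-- The cocycle `κ_σ(s,r) = Σ_{i<r} κ(σⁱ s)`. -/
noncomputable def birk (s : Seq3) (r : ℕ) : Fin 3 → ℝ :=
  ∑ i ∈ Finset.range r, kappa (shift^[i] s)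

/-- The Birkhoff digit frequency of `s` exists and equals `v`. -/
def hasFreq (s : Seq3) (v : Fin 3 → ℝ) : Prop :=
  Tendsto (fun r : ℕ => (r : ℝ)⁻¹ • birk s r) atTop (nhds v)

/-- The lexicographic order on `Σ⁺`. -/
def lexLe (s t : Seq3) : Prop :=
  s = t ∨ ∃ n, (∀ i, i < n → s i = t i) ∧ s n < t n

/-- The set `Max` of maximal sequences. -/
def MaxSet : Set Seq3 := {w | w 0 = 2 ∧ ∀ r : ℕ, lexLe (shift^[r] w) w}

/-- The symbolic β-shift `B(w)`. -/
def BetaShift (w : Seq3) : Set Seq3 := {s | ∀ r : ℕ, lexLe (shift^[r] s) w}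

/-- The digit frequency set `DF(w)`. -/
def DF (w : Seq3) : Set (Fin 3 → ℝ) := {v | ∃ s ∈ BetaShift w, hasFreq s v}

/-- The Misiurewicz–Ziemian digit frequency set `DF_MZ(X)` of a subset `X ⊆ Σ⁺`. -/
def DFMZ (X : Set Seq3) : Set (Fin 3 → ℝ) :=
  {v | ∃ (s : ℕ → Seq3) (r : ℕ → ℕ), (∀ i, s i ∈ X) ∧ Tendsto r atTop atTop ∧
    Tendsto (fun i => (r i : ℝ)⁻¹ • birk (s i) (r i)) atTop (nhds v)}

/-- The standard 2-simplex `Δ ⊆ ℝ³`. -/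
def Delta : Set (Fin 3 → ℝ) := {α | (∀ i, 0 ≤ α i) ∧ α 0 + α 1 + α 2 = 1}

/-- `Δ' = {α ∈ Δ : α₂ > 0}`. -/
def Delta' : Set (Fin 3 → ℝ) := {α | α ∈ Delta ∧ 0 < α 2}

/-- `I` is the infimax sequence of `α`: the infimum, in the lexicographic order, of the
(nonempty) set of maximal sequences with digit frequency `α`; it belongs to `Max`. -/
def IsInfimax (α : Fin 3 → ℝ) (I : Seq3) : Prop :=
  {w | w ∈ MaxSet ∧ hasFreq w α}.Nonempty ∧ I ∈ MaxSet ∧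
    (∀ w, w ∈ MaxSet ∧ hasFreq w α → lexLe I w) ∧
    (∀ b : Seq3, (∀ w, w ∈ MaxSet ∧ hasFreq w α → lexLe b w) → lexLe b I)

/-- The closure of the forward `σ`-orbit of `s` (e.g. `C_α` is `orbitClosure I(α)`). -/
def orbitClosure (s : Seq3) : Set Seq3 := closure {t | ∃ r : ℕ, shift^[r] s = t}

/-- A vector in `ℝ³` is rational if all its coordinates are. -/
def IsRat (v : Fin 3 → ℝ) : Prop := ∀ i, ∃ q : ℚ, v i = (q : ℝ)

/-- A minimal set of a continuous map: a nonempty compact invariant set in which every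
point has dense forward orbit. -/
def IsMinimalSet {X : Type*} [TopologicalSpace X] (f : X → X) (C : Set X) : Prop :=
  C.Nonempty ∧ IsCompact C ∧ Set.MapsTo f C C ∧
    ∀ x ∈ C, C ⊆ closure {y | ∃ n : ℕ, f^[n] x = y}

/-!
The maximal sequences with digit frequency `α` are controlled by the substitutions
`Λₙ : 0 ↦ 1, 1 ↦ 20ⁿ⁺¹, 2 ↦ 20ⁿ`. Undoing `Λₙ` acts linearly on digit counts, and this gives a
multidimensional continued fraction map on `Δ'`. If `α` has itinerary `n₀, n₁, …`, then `I(α)`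
starts with every word `Λ_{n₀} ⋯ Λ_{n_{r-1}}(2)`, and `I(α') = I(α)` forces equal itineraries. Two
distinct vectors share an itinerary only if it has infinitely many nonzero terms of each parity;
then the blocks `Λ_{n₀} ⋯ Λ_{n_{r-1}}(i)` grow, `I(α)` is their limit, and `P_α` is the compact
convex set of all vectors with the itinerary of `α`. Undoing a substitution preserves determinants
up to sign, while the vectors of `P_α` are contracted to zero. Hence any three of them are linearly
dependent and `P_α` is a segment.

Every word of `C_α` is a concatenation of such blocks up to bounded ends, which puts `DF_MZ(C_α)`
inside `P_α`. The endpoints are reached since they are exposed and all blocks occur in `I(α)`; the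
other points are reached since shifting a window by one place changes its digit counts by a
bounded amount. The same concatenations show that Birkhoff sums of a locally constant function
are, to any relative precision, linear functionals of the digit counts. So an invariant measure
`μ` on `C_α` is determined by `∫ κ dμ`, and as this vector depends affinely on `μ`, the ergodic
measures are those over the two endpoints of the segment.
-/

namespace Infimax

section LexicographicWords

variable {A : Type*} [LinearOrder A]

lemma word_nil_le (t : List A) : [] ≤ t :=
  not_lt.1 (List.not_lt_nil t)

lemma word_cons_le_cons_iff {a b : A} {l t : List A} :
    a :: l ≤ b :: t ↔ a < b ∨ a = b ∧ l ≤ t := by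
  rw [← not_lt, List.cons_lt_cons_iff, ← not_lt]
  grind

lemma word_append_le_append_iff (p l t : List A) : p ++ l ≤ p ++ t ↔ l ≤ t := by
  induction p with
  | nil => rfl
  | cons a p ih => simp [word_cons_le_cons_iff, ih]

lemma word_append_lt_append_iff (p l t : List A) : p ++ l < p ++ t ↔ l < t := by
  simpa using (word_append_le_append_iff p t l).not

lemma word_le_append (l t : List A) : l ≤ l ++ t := by
  simpa using (word_append_le_append_iff l [] t).2 (word_nil_le t)

lemma word_le_take_of_le {l t : List A} (h : l ≤ t) : l ≤ t.take l.length := by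
  induction l generalizing t with
  | nil => simp
  | cons a l ih =>
    cases t with
    | nil => exact absurd h (by simp [List.nil_lt_cons])
    | cons b t =>
      rw [word_cons_le_cons_iff] at h
      simpa [word_cons_le_cons_iff] using h.imp_right (And.imp_right ih)

/-- `Avoids W u`: every suffix of the word `u` is strictly below `W`, that is, below `W` at the
first difference or a proper prefix of `W`. For an initial word of `w` this is what remains of the
condition that every shift of the sequence `w` is below `W`. -/
def Avoids (W u : List A) : Prop := ∀ t, t <:+ u → t < W

lemma Avoids.of_cons {W u : List A} {a : A} (h : Avoids W (a :: u)) : Avoids W u :=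
  fun t ht => h t (ht.trans (List.suffix_cons a u))

lemma Avoids.cons {W u : List A} {a : A} (h : Avoids W u) (hau : a :: u < W) :
    Avoids W (a :: u) := by
  intro t ht
  rcases List.suffix_cons_iff.1 ht with rfl | ht
  exacts [hau, h t ht]

end LexicographicWords

section Substitutions

/-- The image of a digit under the substitution `Λₙ : 0 ↦ 1, 1 ↦ 20ⁿ⁺¹, 2 ↦ 20ⁿ`. -/
def digitBlock (n : ℕ) : Fin 3 → List (Fin 3)
  | 0 => [1]
  | 1 => 2 :: List.replicate (n + 1) 0
  | 2 => 2 :: List.replicate n 0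

/-- The substitution `Λₙ` on words. -/
def subst (n : ℕ) (l : List (Fin 3)) : List (Fin 3) := l.flatMap (digitBlock n)

/-- The composition `Λ_{n₀} ∘ Λ_{n₁} ∘ ⋯ ∘ Λ_{n_{r-1}}` for the list `[n₀, …, n_{r-1}]`. -/
def iterSubst (ns : List ℕ) (l : List (Fin 3)) : List (Fin 3) := ns.foldr subst l

/-- The image of the digit `i` under a composition of substitutions. -/
def iterBlock (ns : List ℕ) (i : Fin 3) : List (Fin 3) := iterSubst ns [i]

lemma subst_cons (n : ℕ) (a : Fin 3) (l : List (Fin 3)) :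
    subst n (a :: l) = digitBlock n a ++ subst n l := rfl

lemma subst_append (n : ℕ) (l m : List (Fin 3)) : subst n (l ++ m) = subst n l ++ subst n m :=
  List.flatMap_append

lemma iterSubst_cons (n : ℕ) (ns : List ℕ) (l : List (Fin 3)) :
    iterSubst (n :: ns) l = subst n (iterSubst ns l) := rfl

lemma iterSubst_append_left (ns ms : List ℕ) (l : List (Fin 3)) :
    iterSubst (ns ++ ms) l = iterSubst ns (iterSubst ms l) :=
  List.foldr_append

lemma iterSubst_append (ns : List ℕ) (l m : List (Fin 3)) :
    iterSubst ns (l ++ m) = iterSubst ns l ++ iterSubst ns m := by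
  induction ns with
  | nil => rfl
  | cons n ns ih => simp only [iterSubst_cons, ih, subst_append]

lemma iterSubst_nil (ns : List ℕ) : iterSubst ns [] = [] := by
  induction ns with
  | nil => rfl
  | cons n ns ih => rw [iterSubst_cons, ih]; rfl

lemma iterSubst_cons_word (ns : List ℕ) (a : Fin 3) (l : List (Fin 3)) :
    iterSubst ns (a :: l) = iterBlock ns a ++ iterSubst ns l :=
  iterSubst_append ns [a] l

lemma length_digitBlock_pos (n : ℕ) (a : Fin 3) : 0 < (digitBlock n a).length := by
  fin_cases a <;> simp [digitBlock]

end Substitutions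

section ParikhVectors

/-- The Parikh vector of a word: the number of occurrences of each digit. -/
def parikh (l : List (Fin 3)) : Fin 3 → ℝ := fun i => l.count i

lemma parikh_nil : parikh [] = 0 := by
  ext i
  simp [parikh]

lemma parikh_append (l m : List (Fin 3)) : parikh (l ++ m) = parikh l + parikh m := by
  ext i
  simp [parikh]

lemma parikh_singleton (a : Fin 3) : parikh [a] = Pi.single a 1 := by
  ext i
  by_cases h : a = i <;> simp [parikh, h, eq_comm (a := i)]

lemma parikh_cons (a : Fin 3) (l : List (Fin 3)) : parikh (a :: l) = Pi.single a 1 + parikh l := by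
  rw [← parikh_singleton, ← parikh_append, List.singleton_append]

lemma parikh_nonneg (l : List (Fin 3)) (i : Fin 3) : 0 ≤ parikh l i := Nat.cast_nonneg _

lemma sum_parikh (l : List (Fin 3)) : ∑ i, parikh l i = l.length := by
  induction l with
  | nil => simp [parikh_nil]
  | cons a l ih => simp [parikh_cons, Finset.sum_add_distrib, ih, add_comm]

/-- The inverse of the action of `Λₙ` on Parikh vectors. Projectively, it is the `n`-th branch of
the multidimensional continued fraction map whose itineraries classify infimax sequences. -/
def desubst (n : ℕ) : (Fin 3 → ℝ) ≃ₗ[ℝ] (Fin 3 → ℝ) where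
  toFun v := ![v 1, v 0 - n * v 2, (n + 1) * v 2 - v 0]
  invFun v := ![(n + 1) * v 1 + n * v 2, v 0, v 1 + v 2]
  map_add' u v := by ext i; fin_cases i <;> simp <;> ring
  map_smul' c v := by ext i; fin_cases i <;> simp <;> ring
  left_inv v := by ext i; fin_cases i <;> simp <;> ring
  right_inv v := by ext i; fin_cases i <;> simp <;> ring

@[simp] lemma desubst_apply_zero (n : ℕ) (v : Fin 3 → ℝ) : desubst n v 0 = v 1 := rfl

@[simp] lemma desubst_apply_one (n : ℕ) (v : Fin 3 → ℝ) : desubst n v 1 = v 0 - n * v 2 := rfl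

@[simp] lemma desubst_apply_two (n : ℕ) (v : Fin 3 → ℝ) :
    desubst n v 2 = (n + 1) * v 2 - v 0 := rfl

/-- The inverse of the action of `iterSubst ns` on Parikh vectors. -/
def iterDesubst : List ℕ → (Fin 3 → ℝ) ≃ₗ[ℝ] (Fin 3 → ℝ)
  | [] => LinearEquiv.refl ℝ _
  | n :: ns => (desubst n).trans (iterDesubst ns)

@[simp] lemma iterDesubst_cons (n : ℕ) (ns : List ℕ) (v : Fin 3 → ℝ) :
    iterDesubst (n :: ns) v = iterDesubst ns (desubst n v) := rfl

lemma iterDesubst_append (ns ms : List ℕ) (v : Fin 3 → ℝ) :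
    iterDesubst (ns ++ ms) v = iterDesubst ms (iterDesubst ns v) := by
  induction ns generalizing v with
  | nil => rfl
  | cons n _ ih => exact ih (desubst n v)

/-- The `i`-th coordinate of `iterDesubst ns` as a linear functional. -/
def iterDesubstCoord (ns : List ℕ) (i : Fin 3) : (Fin 3 → ℝ) →ₗ[ℝ] ℝ :=
  LinearMap.proj i ∘ₗ (iterDesubst ns).toLinearMap

@[simp] lemma iterDesubstCoord_apply (ns : List ℕ) (i : Fin 3) (v : Fin 3 → ℝ) :
    iterDesubstCoord ns i v = iterDesubst ns v i := rfl

lemma desubst_parikh_digitBlock (n : ℕ) (a : Fin 3) :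
    desubst n (parikh (digitBlock n a)) = Pi.single a 1 := by
  fin_cases a <;> ext i <;> fin_cases i <;>
    simp [digitBlock, parikh, List.count_replicate]

lemma desubst_parikh_subst (n : ℕ) (l : List (Fin 3)) :
    desubst n (parikh (subst n l)) = parikh l := by
  induction l with
  | nil => exact (congrArg _ parikh_nil).trans (map_zero _) |>.trans parikh_nil.symm
  | cons a l ih =>
    rw [subst_cons, parikh_append, map_add, ih, desubst_parikh_digitBlock, parikh_cons]

lemma iterDesubst_parikh_iterSubst (ns : List ℕ) (l : List (Fin 3)) :
    iterDesubst ns (parikh (iterSubst ns l)) = parikh l := by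
  induction ns with
  | nil => rfl
  | cons n ns ih => rw [iterSubst_cons, iterDesubst_cons, desubst_parikh_subst, ih]

lemma iterDesubst_parikh_iterBlock (ns : List ℕ) (i : Fin 3) :
    iterDesubst ns (parikh (iterBlock ns i)) = Pi.single i 1 :=
  (iterDesubst_parikh_iterSubst ns [i]).trans (parikh_singleton i)

lemma eq_sum_iterDesubst_smul_parikh (ns : List ℕ) (v : Fin 3 → ℝ) :
    v = ∑ i, iterDesubst ns v i • parikh (iterBlock ns i) := by
  apply (iterDesubst ns).injective
  simp only [map_sum, map_smul, iterDesubst_parikh_iterBlock]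
  exact pi_eq_sum_univ' _

lemma sum_eq_sum_iterDesubst_mul_length (ns : List ℕ) (v : Fin 3 → ℝ) :
    ∑ i, v i = ∑ i, iterDesubst ns v i * (iterBlock ns i).length := by
  conv_lhs => rw [eq_sum_iterDesubst_smul_parikh ns v]
  simp only [Finset.sum_apply, Pi.smul_apply, smul_eq_mul]
  rw [Finset.sum_comm]
  simp only [← Finset.mul_sum, sum_parikh]

end ParikhVectors

section Desubstitution

lemma replicate_zero_append_le {x : Fin 3} (hx : x ≠ 0) {z n : ℕ} (hzn : z < n)
    (t W : List (Fin 3)) : List.replicate n 0 ++ W ≤ List.replicate z 0 ++ x :: t := by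
  obtain ⟨k, rfl⟩ := Nat.exists_eq_add_of_lt hzn
  rw [add_assoc, ← List.replicate_append_replicate, List.append_assoc, word_append_le_append_iff,
    List.replicate_succ, List.cons_append, word_cons_le_cons_iff]
  exact Or.inl (Fin.pos_of_ne_zero hx)

lemma subst_zero_cons_le (n : ℕ) (W t : List (Fin 3)) : subst n (0 :: W) ≤ 2 :: t := by
  simp [subst_cons, digitBlock, word_cons_le_cons_iff]

lemma subst_one_cons_le (n : ℕ) {x : Fin 3} (hx : x ≠ 0) (W t : List (Fin 3)) :
    subst n (1 :: W) ≤ 2 :: (List.replicate n 0 ++ x :: t) := by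
  simp only [subst_cons, digitBlock, List.cons_append, word_cons_le_cons_iff]
  exact Or.inr ⟨trivial, replicate_zero_append_le hx (Nat.lt_succ_self n) t _⟩

/-- The state of a right-to-left desubstitution of `u` by `Λₙ` that has produced the word `v` so
far: `u` starts with `z` zeros, and `c` surplus zeros have been passed over. The word `u` is only
approximately an image under `Λₙ`, which shows in the multiple of `e₁ - e₂` in `parikh_eq`; as
long as there is no surplus, lower bounds of `v` transfer to `u`. The disjunct `n + 2 ≤ z` allows
for an imaginary block `0ⁿ⁺²` at the right end of `u`. -/
structure DesubstState (n : ℕ) (W u v : List (Fin 3)) (c z : ℕ) : Prop where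
  avoids : Avoids W v
  parikh_eq : desubst n (parikh u) =
    parikh v + ((c + z : ℝ) - (n + 2)) • (Pi.single 1 1 - Pi.single 2 1)
  leading : n + 2 ≤ z ∨ ∃ x t, u = List.replicate z 0 ++ x :: t ∧ x ≠ 0 ∧
    (c = 0 → ∀ W', W' ≤ v → subst n W' ≤ x :: t)

namespace DesubstState

variable {n c z : ℕ} {W u v : List (Fin 3)}

lemma nil (hW : W ≠ []) : DesubstState n W [] [] 0 (n + 2) where
  avoids t ht := by
    obtain ⟨b, W', rfl⟩ := List.exists_cons_of_ne_nil hW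
    rw [List.suffix_nil.1 ht]
    exact List.nil_lt_cons b W'
  parikh_eq := by simp [parikh_nil]
  leading := Or.inl le_rfl

lemma cons_zero (h : DesubstState n W u v c z) : DesubstState n W (0 :: u) v c (z + 1) where
  avoids := h.avoids
  parikh_eq := by
    rw [parikh_cons, map_add, h.parikh_eq]
    ext i; fin_cases i <;> simp <;> ring
  leading := by
    rcases h.leading with hz | ⟨x, t, rfl, hx, ht⟩
    · exact Or.inl (by omega)
    · exact Or.inr ⟨x, t, by simp [List.replicate_succ], hx, ht⟩

lemma cons_one (h : DesubstState n (2 :: W) u v c z) :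
    DesubstState n (2 :: W) (1 :: u) (0 :: v) (c + z) 0 where
  avoids := h.avoids.cons (by simp [List.cons_lt_cons_iff])
  parikh_eq := by
    rw [parikh_cons, map_add, h.parikh_eq, parikh_cons]
    ext i; fin_cases i <;> simp
  leading := by
    refine Or.inr ⟨1, u, by simp, by simp, fun hcz W' hW' => ?_⟩
    obtain ⟨rfl, rfl⟩ : c = 0 ∧ z = 0 := by omega
    obtain ⟨x, t, rfl, -, ht⟩ := h.leading.resolve_left (by omega)
    cases W' with
    | nil => exact word_nil_le _
    | cons b W' =>
      obtain ⟨rfl, hW'v⟩ : b = 0 ∧ W' ≤ v := by simpa [word_cons_le_cons_iff] using hW'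
      simpa [subst_cons, digitBlock, word_cons_le_cons_iff] using ht rfl W' hW'v

lemma le_leading_of_avoids (h : DesubstState n (2 :: W) u v c z)
    (hu : Avoids (subst n (2 :: W)) (2 :: u)) : n ≤ z := by
  by_contra! hzn
  obtain ⟨x, t, rfl, hx, -⟩ := h.leading.resolve_left (by omega)
  refine (hu _ List.suffix_rfl).not_ge ?_
  simp only [subst_cons, digitBlock, List.cons_append, word_cons_le_cons_iff]
  exact Or.inr ⟨trivial, replicate_zero_append_le hx hzn t _⟩

lemma cons_two_of_eq (h : DesubstState n (2 :: W) u v 0 n)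
    (hu : Avoids (subst n (2 :: W)) (2 :: u)) :
    DesubstState n (2 :: W) (2 :: u) (2 :: v) 0 0 := by
  obtain ⟨x, t, rfl, hx, ht⟩ := h.leading.resolve_left (by omega)
  have transfer : ∀ W', W' ≤ 2 :: v → subst n W' ≤ 2 :: (List.replicate n 0 ++ x :: t) := by
    rintro (_ | ⟨b, W'⟩) hW'
    · exact word_nil_le _
    · fin_cases b
      · exact subst_zero_cons_le n W' _
      · exact subst_one_cons_le n hx W' t
      · have hW'v : W' ≤ v := by simpa [word_cons_le_cons_iff] using hW'
        simpa [subst_cons, digitBlock, word_cons_le_cons_iff, word_append_le_append_iff]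
          using ht rfl W' hW'v
  refine ⟨h.avoids.cons (not_le.1 fun hle => ?_), ?_,
    Or.inr ⟨2, _, by simp, by simp, fun _ => transfer⟩⟩
  · exact (hu _ List.suffix_rfl).not_ge (transfer _ hle)
  · rw [parikh_cons, map_add, h.parikh_eq, parikh_cons]
    ext i; fin_cases i <;> simp <;> ring

lemma cons_two_of_surplus (h : DesubstState n (2 :: W) u v (c + 1) n) :
    DesubstState n (2 :: W) (2 :: u) (1 :: v) c 0 where
  avoids := h.avoids.cons (by simp [List.cons_lt_cons_iff])
  parikh_eq := by
    rw [parikh_cons, map_add, h.parikh_eq, parikh_cons]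
    ext i; fin_cases i <;> simp <;> ring
  leading := by
    obtain ⟨x, t, rfl, hx, -⟩ := h.leading.resolve_left (by omega)
    refine Or.inr ⟨2, _, rfl, by simp, fun _ => ?_⟩
    rintro (_ | ⟨b, W'⟩) hW'
    · exact word_nil_le _
    · fin_cases b
      · exact subst_zero_cons_le n W' _
      · exact subst_one_cons_le n hx W' t
      · exact absurd hW' (by simp [List.cons_lt_cons_iff])

lemma cons_two_of_lt {k : ℕ} (h : DesubstState n (2 :: W) u v c (n + 1 + k)) :
    DesubstState n (2 :: W) (2 :: u) (1 :: v) (c + k) 0 where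
  avoids := h.avoids.cons (by simp [List.cons_lt_cons_iff])
  parikh_eq := by
    rw [parikh_cons, map_add, h.parikh_eq, parikh_cons]
    ext i; fin_cases i <;> simp <;> ring
  leading := by
    refine Or.inr ⟨2, u, rfl, by simp, fun hck => ?_⟩
    obtain ⟨rfl, rfl⟩ : c = 0 ∧ k = 0 := by omega
    obtain ⟨x, t, rfl, -, ht⟩ := h.leading.resolve_left (by omega)
    rintro (_ | ⟨b, W'⟩) hW'
    · exact word_nil_le _
    · fin_cases b
      · exact subst_zero_cons_le n W' _
      · have hW'v : W' ≤ v := by simpa [word_cons_le_cons_iff] using hW'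
        simpa [subst_cons, digitBlock, word_cons_le_cons_iff, word_append_le_append_iff]
          using ht rfl W' hW'v
      · exact absurd hW' (by simp [List.cons_lt_cons_iff])

end DesubstState

lemma exists_desubstState (n : ℕ) (W u : List (Fin 3)) (hu : Avoids (subst n (2 :: W)) u) :
    ∃ v c z, DesubstState n (2 :: W) u v c z := by
  induction u with
  | nil => exact ⟨[], 0, n + 2, .nil (by simp)⟩
  | cons a u ih =>
    obtain ⟨v, c, z, h⟩ := ih hu.of_cons
    fin_cases a
    · exact ⟨v, c, z + 1, h.cons_zero⟩
    · exact ⟨0 :: v, c + z, 0, h.cons_one⟩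
    · obtain rfl | ⟨k, rfl⟩ : z = n ∨ ∃ k, z = n + 1 + k := by
        rcases (h.le_leading_of_avoids hu).eq_or_lt with hz | hz
        exacts [Or.inl hz.symm, Or.inr (Nat.exists_eq_add_of_le hz)]
      · rcases c with _ | c
        exacts [⟨_, _, _, h.cons_two_of_eq hu⟩, ⟨_, _, _, h.cons_two_of_surplus⟩]
      · exact ⟨_, _, _, h.cons_two_of_lt⟩

/-- `L` is bounded above on the Parikh vectors of the words avoiding `W`. The conditions on the
first digit of `W` and on the values of `L` at the digits make the property inductive under
substitution, see `BoundsAvoiding.subst`. -/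
structure BoundsAvoiding (W : List (Fin 3)) (L : (Fin 3 → ℝ) →ₗ[ℝ] ℝ) : Prop where
  head_eq_two : ∃ W', W = 2 :: W'
  two_nonneg : 0 ≤ L (Pi.single 2 1)
  one_le_two : L (Pi.single 1 1) ≤ L (Pi.single 2 1)
  zero_le_two : L (Pi.single 0 1) ≤ L (Pi.single 2 1)
  bounded : ∃ K : ℝ, ∀ u, Avoids W u → L (parikh u) ≤ K

lemma desubst_single_zero (n : ℕ) :
    desubst n (Pi.single 0 1) = Pi.single 1 1 - Pi.single 2 1 := by
  ext i; fin_cases i <;> simp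

lemma desubst_single_one (n : ℕ) : desubst n (Pi.single 1 1) = Pi.single 0 1 := by
  ext i; fin_cases i <;> simp

lemma desubst_single_two (n : ℕ) :
    desubst n (Pi.single 2 1) =
      Pi.single 2 1 - (n : ℝ) • (Pi.single 1 1 - Pi.single 2 1) := by
  ext i; fin_cases i <;> simp; ring

lemma BoundsAvoiding.subst {W : List (Fin 3)} {L : (Fin 3 → ℝ) →ₗ[ℝ] ℝ} (n : ℕ)
    (h : BoundsAvoiding W L) : BoundsAvoiding (subst n W) (L ∘ₗ desubst n) := by
  obtain ⟨⟨W', rfl⟩, h2, h12, h02, K, hK⟩ := h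
  have hn : (0 : ℝ) ≤ n * (L (Pi.single 2 1) - L (Pi.single 1 1)) :=
    mul_nonneg n.cast_nonneg (sub_nonneg.2 h12)
  refine ⟨⟨_, rfl⟩, ?_, ?_, ?_, K + (n + 2) * (L (Pi.single 2 1) - L (Pi.single 1 1)),
    fun u hu => ?_⟩
  · simp only [LinearMap.comp_apply, LinearEquiv.coe_coe, desubst_single_two, map_sub,
      map_smul, smul_eq_mul]
    linarith
  · simp only [LinearMap.comp_apply, LinearEquiv.coe_coe, desubst_single_two, desubst_single_one,
      map_sub, map_smul, smul_eq_mul]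
    linarith
  · simp only [LinearMap.comp_apply, LinearEquiv.coe_coe, desubst_single_two, desubst_single_zero,
      map_sub, map_smul, smul_eq_mul]
    linarith
  · obtain ⟨v, c, z, hv⟩ := exists_desubstState n W' u hu
    have hcz : 0 ≤ (c + z : ℝ) * (L (Pi.single 2 1) - L (Pi.single 1 1)) :=
      mul_nonneg (by positivity) (sub_nonneg.2 h12)
    have hLv := hK v hv.avoids
    simp only [LinearMap.comp_apply, LinearEquiv.coe_coe, hv.parikh_eq, map_add, map_smul,
      map_sub, smul_eq_mul]
    linarith

lemma boundsAvoiding_two_zero : BoundsAvoiding [2, 0] (LinearMap.proj 2) := by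
  refine ⟨⟨_, rfl⟩, by simp, by simp, by simp, 1, fun u => ?_⟩
  simp only [LinearMap.proj_apply]
  induction u with
  | nil => simp [parikh_nil]
  | cons a u ih =>
    intro hu
    by_cases ha : a = 2
    · obtain rfl : u = [] := by
        have hlt := hu _ List.suffix_rfl
        cases u with
        | nil => rfl
        | cons b u => simp [ha, List.cons_lt_cons_iff] at hlt
      simp [ha, parikh_singleton]
    · simpa [parikh_cons, ha, Ne.symm ha] using ih hu.of_cons

lemma boundsAvoiding_iterSubst (ns : List ℕ) :
    BoundsAvoiding (iterSubst ns [2, 0]) (iterDesubstCoord ns 2) := by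
  induction ns with
  | nil => exact boundsAvoiding_two_zero
  | cons n ns ih => exact ih.subst n

end Desubstitution

section InitialWords

lemma shift_iterate_apply (s : Seq3) (r i : ℕ) : shift^[r] s i = s (r + i) := by
  induction r generalizing s with
  | zero => simp
  | succ r ih => rw [Function.iterate_succ_apply, ih, shift, Nat.add_right_comm]

/-- The word `s₀ s₁ … s_{N-1}`. -/
def initialWord (s : Seq3) (N : ℕ) : List (Fin 3) := (List.range N).map s

@[simp] lemma length_initialWord (s : Seq3) (N : ℕ) : (initialWord s N).length = N := by
  simp [initialWord]

lemma initialWord_add (s : Seq3) (M N : ℕ) :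
    initialWord s (M + N) = initialWord s M ++ initialWord (shift^[M] s) N := by
  simp [initialWord, List.range_add, shift_iterate_apply]

lemma initialWord_succ (s : Seq3) (N : ℕ) :
    initialWord s (N + 1) = s 0 :: initialWord (shift s) N := by
  rw [add_comm, initialWord_add]
  rfl

lemma initialWord_succ_last (s : Seq3) (N : ℕ) :
    initialWord s (N + 1) = initialWord s N ++ [s N] := by
  simp [initialWord, List.range_succ]

lemma getElem_initialWord (s : Seq3) {N i : ℕ} (hi : i < (initialWord s N).length) :
    (initialWord s N)[i] = s i := by
  simp [initialWord]

lemma initialWord_congr {s t : Seq3} {N : ℕ} (h : ∀ i < N, s i = t i) :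
    initialWord s N = initialWord t N :=
  List.map_congr_left fun i hi => h i (List.mem_range.1 hi)

lemma exists_eq_initialWord_of_suffix {s : Seq3} {N : ℕ} {t : List (Fin 3)}
    (h : t <:+ initialWord s N) : ∃ k, t = initialWord (shift^[k] s) t.length := by
  obtain ⟨p, hp⟩ := h
  have hN : N = p.length + t.length := by simpa using (congrArg List.length hp).symm
  rw [hN, initialWord_add] at hp
  exact ⟨p.length, (List.append_inj hp (by simp)).2⟩

/-- The sequence `s` starts with the word `l`. -/
def HasPrefix (s : Seq3) (l : List (Fin 3)) : Prop := initialWord s l.length = l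

lemma hasPrefix_initialWord (s : Seq3) (N : ℕ) : HasPrefix s (initialWord s N) := by
  simp [HasPrefix]

lemma HasPrefix.apply_eq {s : Seq3} {l : List (Fin 3)} (h : HasPrefix s l) {i : ℕ}
    (hi : i < l.length) : s i = l[i] := by
  rw [← getElem_initialWord s (by simpa using hi)]
  exact List.getElem_of_eq h _

lemma hasPrefix_of_getElem {s : Seq3} {l : List (Fin 3)}
    (h : ∀ i, (hi : i < l.length) → s i = l[i]) : HasPrefix s l :=
  List.ext_getElem (by simp) fun i _ hi => by rw [getElem_initialWord, h i hi]

lemma hasPrefix_append {s : Seq3} {l m : List (Fin 3)} :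
    HasPrefix s (l ++ m) ↔ HasPrefix s l ∧ HasPrefix (shift^[l.length] s) m := by
  rw [HasPrefix, List.length_append, initialWord_add]
  exact ⟨fun h => List.append_inj h (by simp), fun ⟨hl, hm⟩ => by rw [hl, hm]⟩

lemma hasPrefix_cons {s : Seq3} {a : Fin 3} {l : List (Fin 3)} :
    HasPrefix s (a :: l) ↔ s 0 = a ∧ HasPrefix (shift s) l := by
  simp [HasPrefix, initialWord_succ]

end InitialWords

section LexicographicOrder

variable {s t : Seq3}

lemma lexLe_iff_toLex_le : lexLe s t ↔ toLex s ≤ toLex t := by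
  rw [le_iff_eq_or_lt]
  rfl

lemma exists_lt_of_not_lexLe (h : ¬ lexLe s t) : ∃ n, (∀ i < n, s i = t i) ∧ t n < s n := by
  rw [lexLe_iff_toLex_le, not_le] at h
  obtain ⟨n, hn, hlt⟩ := h
  exact ⟨n, fun i hi => (hn i hi).symm, hlt⟩

lemma lexLe_of_apply_zero_lt (h : s 0 < t 0) : lexLe s t :=
  Or.inr ⟨0, by simp, h⟩

lemma initialWord_lt_of_lt {n N : ℕ} (hn : n < N) (heq : ∀ i < n, s i = t i) (hlt : s n < t n) :
    initialWord s N < initialWord t N := by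
  obtain ⟨k, rfl⟩ := Nat.exists_eq_add_of_lt hn
  rw [add_assoc, initialWord_add s, initialWord_add t, initialWord_congr heq,
    word_append_lt_append_iff, initialWord_succ, initialWord_succ, List.cons_lt_cons_iff]
  exact Or.inl (by simpa [shift_iterate_apply] using hlt)

lemma initialWord_le_of_lexLe (h : lexLe s t) (N : ℕ) : initialWord s N ≤ initialWord t N := by
  rcases h with rfl | ⟨n, heq, hlt⟩
  · exact le_rfl
  · rcases lt_or_ge n N with hn | hn
    · exact (initialWord_lt_of_lt hn heq hlt).le
    · exact (initialWord_congr fun i hi => heq i (hi.trans_le hn)).le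

lemma lexLe_of_forall_initialWord_le (h : ∀ N, initialWord s N ≤ initialWord t N) :
    lexLe s t := by
  by_contra hst
  obtain ⟨n, heq, hlt⟩ := exists_lt_of_not_lexLe hst
  exact (h (n + 1)).not_gt
    (initialWord_lt_of_lt n.lt_succ_self (fun i hi => (heq i hi).symm) hlt)

lemma le_initialWord_of_le {W : List (Fin 3)} {N : ℕ} (h : W ≤ initialWord s N) :
    W ≤ initialWord s W.length := by
  have hlong : W ≤ initialWord s (W.length + N) := by
    refine h.trans ?_
    rw [add_comm, initialWord_add]
    exact word_le_append _ _
  simpa [initialWord_add] using word_le_take_of_le hlong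

lemma initialWord_le_of_le {M N : ℕ} (hMN : M ≤ N) (h : initialWord s N ≤ initialWord t N) :
    initialWord s M ≤ initialWord t M := by
  obtain ⟨k, rfl⟩ := Nat.exists_eq_add_of_le hMN
  have hs : initialWord s M ≤ initialWord t (M + k) :=
    (word_le_append _ _).trans ((initialWord_add s M k).symm.trans_le h)
  simpa using le_initialWord_of_le hs

lemma lexLe_of_frequently_initialWord_le
    (h : ∀ N, ∃ M ≥ N, initialWord s M ≤ initialWord t M) : lexLe s t :=
  lexLe_of_forall_initialWord_le fun N =>
    let ⟨_, hM, hle⟩ := h N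
    initialWord_le_of_le hM hle

lemma lexLe_of_hasPrefix {l : List (Fin 3)} (hs : HasPrefix s l) (ht : HasPrefix t l)
    (h : lexLe (shift^[l.length] s) (shift^[l.length] t)) : lexLe s t :=
  lexLe_of_frequently_initialWord_le fun N => ⟨l.length + N, by lia, by
    rw [initialWord_add s, initialWord_add t, hs, ht, word_append_le_append_iff]
    exact initialWord_le_of_lexLe h N⟩

lemma le_initialWord_of_append_le {l m : List (Fin 3)}
    (h : l ++ m ≤ initialWord s (l ++ m).length) : l ≤ initialWord s l.length :=
  le_initialWord_of_le ((word_le_append l m).trans h)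

lemma HasPrefix.of_lexLe {W : List (Fin 3)} (ht : HasPrefix t W) (hst : lexLe s t)
    (hs : W ≤ initialWord s W.length) : HasPrefix s W :=
  le_antisymm ((initialWord_le_of_lexLe hst _).trans_eq ht) hs

/-- The sequence `l000…`, the least sequence starting with the word `l`. -/
def zeroExtend (l : List (Fin 3)) : Seq3 := fun i => l.getD i 0

lemma hasPrefix_zeroExtend (l : List (Fin 3)) : HasPrefix (zeroExtend l) l :=
  hasPrefix_of_getElem fun i hi => by simp [zeroExtend, hi]

lemma zeroExtend_lexLe_iff {W : List (Fin 3)} :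
    lexLe (zeroExtend W) s ↔ W ≤ initialWord s W.length := by
  refine ⟨fun h => ?_, fun h => ?_⟩
  · exact (hasPrefix_zeroExtend W).symm.trans_le (initialWord_le_of_lexLe h _)
  · by_contra hcon
    obtain ⟨n, heq, hlt⟩ := exists_lt_of_not_lexLe hcon
    have hn : n < W.length := by
      by_contra hn
      simp [zeroExtend, hn] at hlt
    refine h.not_gt ?_
    exact (initialWord_lt_of_lt hn (fun i hi => (heq i hi).symm) hlt).trans_eq
      (hasPrefix_zeroExtend W)

end LexicographicOrder

section DigitFrequencies

lemma kappa_eq_single (s : Seq3) : kappa s = Pi.single (s 0) 1 := by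
  ext i
  simp [kappa, Pi.single_apply]

lemma birk_eq_birkhoffSum (s : Seq3) (N : ℕ) : birk s N = birkhoffSum shift kappa N s := rfl

lemma birk_add (s : Seq3) (M N : ℕ) : birk s (M + N) = birk s M + birk (shift^[M] s) N :=
  birkhoffSum_add shift kappa M N s

lemma birk_succ (s : Seq3) (N : ℕ) : birk s (N + 1) = birk s N + Pi.single (s N) 1 := by
  rw [birk_eq_birkhoffSum, birkhoffSum_succ, kappa_eq_single, shift_iterate_apply, add_zero,
    birk_eq_birkhoffSum]

lemma birk_eq_parikh (s : Seq3) (N : ℕ) : birk s N = parikh (initialWord s N) := by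
  induction N with
  | zero => exact parikh_nil.symm
  | succ N ih => rw [birk_succ, ih, initialWord_succ_last, parikh_append, parikh_singleton]

lemma HasPrefix.birk_eq {s : Seq3} {l : List (Fin 3)} (h : HasPrefix s l) :
    birk s l.length = parikh l := by
  rw [birk_eq_parikh, h]

lemma birk_nonneg (s : Seq3) (N : ℕ) (i : Fin 3) : 0 ≤ birk s N i := by
  rw [birk_eq_parikh]
  exact parikh_nonneg _ i

lemma sum_birk (s : Seq3) (N : ℕ) : ∑ i, birk s N i = N := by
  rw [birk_eq_parikh, sum_parikh, length_initialWord]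

lemma birk_le (s : Seq3) (N : ℕ) (i : Fin 3) : birk s N i ≤ N := by
  rw [← sum_birk s N]
  exact Finset.single_le_sum (fun j _ => birk_nonneg s N j) (Finset.mem_univ i)

lemma norm_birk_le (s : Seq3) (N : ℕ) : ‖birk s N‖ ≤ N := by
  refine (pi_norm_le_iff_of_nonneg N.cast_nonneg).2 fun i => ?_
  rw [Real.norm_of_nonneg (birk_nonneg s N i)]
  exact birk_le s N i

/-- The digit counts of `s` differ by a bounded amount from those predicted by `β`. -/
def BoundedDiscrepancy (s : Seq3) (β : Fin 3 → ℝ) : Prop :=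
  ∃ C : ℝ, ∀ N : ℕ, ‖birk s N - (N : ℝ) • β‖ ≤ C

lemma BoundedDiscrepancy.hasFreq {s : Seq3} {β : Fin 3 → ℝ} (h : BoundedDiscrepancy s β) :
    hasFreq s β := by
  obtain ⟨C, hC⟩ := h
  refine tendsto_iff_norm_sub_tendsto_zero.2 ?_
  have hlim : Tendsto (fun N : ℕ => (N : ℝ)⁻¹ * C) atTop (𝓝 0) := by
    simpa using (tendsto_inv_atTop_nhds_zero_nat (𝕜 := ℝ)).mul_const C
  refine squeeze_zero' (Eventually.of_forall fun N => norm_nonneg _) ?_ hlim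
  filter_upwards [eventually_gt_atTop 0] with N hN
  have hN' : (N : ℝ) ≠ 0 := by exact_mod_cast hN.ne'
  have hdiff : (N : ℝ)⁻¹ • birk s N - β = (N : ℝ)⁻¹ • (birk s N - (N : ℝ) • β) := by
    rw [smul_sub, inv_smul_smul₀ hN']
  rw [hdiff, norm_smul, norm_inv, Real.norm_natCast]
  gcongr
  exact hC N

lemma tendsto_inv_mul_apply_birk {ι : Type*} {l : Filter ι} {s : ι → Seq3} {N : ι → ℕ}
    {v : Fin 3 → ℝ} (L : (Fin 3 → ℝ) →ₗ[ℝ] ℝ)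
    (h : Tendsto (fun i => (N i : ℝ)⁻¹ • birk (s i) (N i)) l (𝓝 v)) :
    Tendsto (fun i => (N i : ℝ)⁻¹ * L (birk (s i) (N i))) l (𝓝 (L v)) := by
  simpa [Function.comp_def] using (L.continuous_of_finiteDimensional.tendsto v).comp h

lemma iterSubst_le_initialWord_of_mem_MaxSet {w : Seq3} {β : Fin 3 → ℝ} (hw : w ∈ MaxSet)
    (hβ : hasFreq w β) (ns : List ℕ) (hpos : 0 < iterDesubst ns β 2) :
    iterSubst ns [2, 0] ≤ initialWord w (iterSubst ns [2, 0]).length := by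
  by_contra hlt
  obtain ⟨K, hK⟩ := (boundsAvoiding_iterSubst ns).bounded
  have havoids (N : ℕ) : Avoids (iterSubst ns [2, 0]) (initialWord w N) := by
    intro t ht
    obtain ⟨k, hk⟩ := exists_eq_initialWord_of_suffix ht
    by_contra! hle
    rw [hk] at hle
    exact hlt (le_initialWord_of_le (hle.trans (initialWord_le_of_lexLe (hw.2 k) _)))
  have hK_lim : Tendsto (fun N : ℕ => (N : ℝ)⁻¹ * K) atTop (𝓝 0) := by
    simpa using (tendsto_inv_atTop_nhds_zero_nat (𝕜 := ℝ)).mul_const K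
  refine hpos.not_ge (le_of_tendsto_of_tendsto'
    (tendsto_inv_mul_apply_birk (iterDesubstCoord ns 2) hβ) hK_lim fun N => ?_)
  gcongr
  rw [birk_eq_parikh]
  exact hK _ (havoids N)

end DigitFrequencies

section OrbitClosures

lemma continuous_shift : Continuous shift := continuous_pi fun i => continuous_apply (i + 1)

lemma eventually_initialWord_eq (s : Seq3) (N : ℕ) :
    ∀ᶠ t in 𝓝 s, initialWord t N = initialWord s N := by
  have hdigits : ∀ᶠ t in 𝓝 s, ∀ i ∈ Finset.range N, t i = s i :=
    (eventually_all_finset _).2 fun i _ =>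
      (isOpen_discrete {s i}).preimage (continuous_apply i) |>.eventually_mem
        (Set.mem_singleton (s i))
  filter_upwards [hdigits] with t ht
  exact initialWord_congr fun i hi => ht i (Finset.mem_range.2 hi)

variable {J s : Seq3}

lemma shift_iterate_mem_orbitClosure_self (J : Seq3) (k : ℕ) : shift^[k] J ∈ orbitClosure J :=
  subset_closure ⟨k, rfl⟩

lemma shift_mem_orbitClosure (h : s ∈ orbitClosure J) : shift s ∈ orbitClosure J := by
  refine map_mem_closure continuous_shift h ?_
  rintro t ⟨r, rfl⟩
  exact ⟨r + 1, Function.iterate_succ_apply' _ _ _⟩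

lemma shift_iterate_mem_orbitClosure (h : s ∈ orbitClosure J) (k : ℕ) :
    shift^[k] s ∈ orbitClosure J :=
  Set.MapsTo.iterate (fun _ => shift_mem_orbitClosure) k h

lemma exists_initialWord_eq_of_mem_orbitClosure (h : s ∈ orbitClosure J) (N : ℕ) :
    ∃ k, initialWord (shift^[k] J) N = initialWord s N := by
  obtain ⟨_, ht, k, rfl⟩ := mem_closure_iff_nhds.1 h _ (eventually_initialWord_eq s N)
  exact ⟨k, ht⟩

lemma isClosed_orbitClosure (J : Seq3) : IsClosed (orbitClosure J) :=
  isClosed_closure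

lemma isCompact_orbitClosure (J : Seq3) : IsCompact (orbitClosure J) :=
  (isClosed_orbitClosure J).isCompact

end OrbitClosures

section MaximalSequences

lemma upperSemicontinuous_toLex : UpperSemicontinuous fun s : Seq3 => toLex s := by
  rintro s t ⟨n, heq, hlt⟩
  filter_upwards [eventually_initialWord_eq s (n + 1)] with s' hs'
  have hdigit : ∀ i ≤ n, s' i = s i := fun i hi => by
    have hi' : i < (initialWord s' (n + 1)).length := by simpa using Nat.lt_succ_of_le hi
    rw [← getElem_initialWord s' hi', List.getElem_of_eq hs' hi', getElem_initialWord]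
  exact ⟨n, fun i hi => (hdigit i hi.le).trans (heq i hi), (hdigit n le_rfl).trans_lt hlt⟩

lemma exists_lexLe_of_isCompact {K : Set Seq3} (hK : IsCompact K) (hne : K.Nonempty) :
    ∃ w ∈ K, ∀ s ∈ K, lexLe s w := by
  obtain ⟨w, hw, hmax⟩ :=
    upperSemicontinuous_toLex.upperSemicontinuousOn K |>.exists_isMaxOn hne hK
  exact ⟨w, hw, fun s hs => lexLe_iff_toLex_le.2 (hmax hs)⟩

variable {β : Fin 3 → ℝ}

lemma exists_digit_of_deficit (hβ : ∀ i, 0 ≤ β i) (hsum : ∑ i, β i = 1) (d : Fin 3 → ℝ)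
    (hd : (∀ i, -1 ≤ d i) ∧ ∑ i, d i = 0) :
    ∃ a : Fin 3, (∀ i, -1 ≤ (d + β - Pi.single a 1 : Fin 3 → ℝ) i) ∧
      ∑ i, (d + β - Pi.single a 1 : Fin 3 → ℝ) i = 0 := by
  obtain ⟨a, ha⟩ := Finite.exists_max (d + β)
  have hpos : 0 ≤ (d + β) a := by
    by_contra! hneg
    have hlt : ∑ i, (d + β) i < ∑ _i : Fin 3, 0 :=
      Finset.sum_lt_sum_of_nonempty Finset.univ_nonempty fun i _ => (ha i).trans_lt hneg
    simp only [Pi.add_apply, Finset.sum_add_distrib, hd.2, hsum] at hlt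
    norm_num at hlt
  refine ⟨a, fun i => ?_, by simp [Finset.sum_add_distrib, hd.2, hsum]⟩
  by_cases hia : i = a
  · subst hia
    simpa using hpos
  · have hdi := hd.1 i
    have hβi := hβ i
    simp only [Pi.sub_apply, Pi.add_apply, Pi.single_eq_of_ne hia]
    linarith

-- Greedy choice: always append the digit with the largest deficit.
lemma exists_boundedDiscrepancy (hβ : ∀ i, 0 ≤ β i) (hsum : ∑ i, β i = 1) :
    ∃ s, BoundedDiscrepancy s β := by
  let Deficit := {d : Fin 3 → ℝ // (∀ i, -1 ≤ d i) ∧ ∑ i, d i = 0}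
  choose digit hdigit using fun d : Deficit => exists_digit_of_deficit hβ hsum d.1 d.2
  let next (d : Deficit) : Deficit := ⟨d.1 + β - Pi.single (digit d) 1, hdigit d⟩
  let deficit (N : ℕ) : Deficit := next^[N] ⟨0, by simp, by simp⟩
  let s : Seq3 := fun N => digit (deficit N)
  have hbirk (N : ℕ) : birk s N - (N : ℝ) • β = -(deficit N).1 := by
    induction N with
    | zero => simp [birk, deficit]
    | succ N ih =>
      have hnext : (deficit (N + 1)).1 = (deficit N).1 + β - Pi.single (s N) 1 := by
        simp only [deficit, Function.iterate_succ_apply']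
        rfl
      rw [hnext, birk_succ, ← neg_eq_iff_eq_neg.2 ih]
      push_cast
      module
  refine ⟨s, 2, fun N => (pi_norm_le_iff_of_nonneg zero_le_two).2 fun i => ?_⟩
  obtain ⟨hlow, hzero⟩ := (deficit N).2
  rw [hbirk, Pi.neg_apply, norm_neg, Real.norm_eq_abs, abs_le]
  rw [Fin.sum_univ_three] at hzero
  have h0 := hlow 0
  have h1 := hlow 1
  have h2 := hlow 2
  fin_cases i <;> constructor <;> simp only [Fin.zero_eta, Fin.mk_one, Fin.reduceFinMk] <;> linarith

lemma BoundedDiscrepancy.of_mem_orbitClosure {s t : Seq3} (h : BoundedDiscrepancy s β)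
    (ht : t ∈ orbitClosure s) : BoundedDiscrepancy t β := by
  obtain ⟨C, hC⟩ := h
  refine ⟨C + C, fun N => ?_⟩
  obtain ⟨k, hk⟩ := exists_initialWord_eq_of_mem_orbitClosure ht N
  have hsplit : birk t N - (N : ℝ) • β
      = (birk s (k + N) - ((k + N : ℕ) : ℝ) • β) - (birk s k - (k : ℝ) • β) := by
    rw [birk_add, birk_eq_parikh (shift^[k] s), hk, ← birk_eq_parikh]
    push_cast
    module
  rw [hsplit]
  exact (norm_sub_le _ _).trans (add_le_add (hC _) (hC _))

lemma exists_apply_eq_of_hasFreq {s : Seq3} (h : hasFreq s β) {i : Fin 3} (hi : 0 < β i) :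
    ∃ N, s N = i := by
  by_contra! hne
  have hzero (N : ℕ) : birk s N i = 0 := by
    induction N with
    | zero => simp [birk]
    | succ N ih => simp [birk_succ, ih, (hne N).symm]
  have hlim := tendsto_inv_mul_apply_birk (LinearMap.proj i) h
  simp only [LinearMap.proj_apply, hzero, mul_zero] at hlim
  exact hi.ne (tendsto_nhds_unique tendsto_const_nhds hlim)

lemma exists_mem_MaxSet_boundedDiscrepancy (hβ : ∀ i, 0 ≤ β i) (hsum : ∑ i, β i = 1)
    (hβ2 : 0 < β 2) : ∃ w ∈ MaxSet, BoundedDiscrepancy w β := by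
  obtain ⟨s, hs⟩ := exists_boundedDiscrepancy hβ hsum
  obtain ⟨w, hw, hmax⟩ := exists_lexLe_of_isCompact (isCompact_orbitClosure s)
    ⟨s, shift_iterate_mem_orbitClosure_self s 0⟩
  refine ⟨w, ⟨?_, fun r => hmax _ (shift_iterate_mem_orbitClosure hw r)⟩,
    hs.of_mem_orbitClosure hw⟩
  obtain ⟨k, hk⟩ := exists_apply_eq_of_hasFreq hs.hasFreq hβ2
  have hle := initialWord_le_of_lexLe (hmax _ (shift_iterate_mem_orbitClosure_self s k)) 1
  have hdigit : (2 : Fin 3) ≤ w 0 := by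
    simpa [initialWord, word_cons_le_cons_iff, shift_iterate_apply, hk, ← le_iff_lt_or_eq] using hle
  exact le_antisymm (Fin.le_last _) hdigit

end MaximalSequences

section InfiniteSubstitution

lemma length_le_length_subst (n : ℕ) (l : List (Fin 3)) : l.length ≤ (subst n l).length := by
  induction l with
  | nil => simp
  | cons a l ih =>
    have hblock := length_digitBlock_pos n a
    rw [subst_cons, List.length_append, List.length_cons]
    lia

/-- The substitution `Λₙ` on sequences. The default value of `getD` is never taken. -/
def substSeq (n : ℕ) (x : Seq3) : Seq3 := fun i => (subst n (initialWord x (i + 1))).getD i 0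

variable {n : ℕ} {x y : Seq3}

lemma hasPrefix_substSeq_initialWord (n : ℕ) (x : Seq3) (N : ℕ) :
    HasPrefix (substSeq n x) (subst n (initialWord x N)) := by
  refine hasPrefix_of_getElem fun i hi => ?_
  have hi' : i < (subst n (initialWord x (i + 1))).length :=
    Nat.lt_of_lt_of_le (by simp) (length_le_length_subst n _)
  rw [← List.getD_eq_getElem _ 0 hi, substSeq]
  rcases le_total N (i + 1) with hN | hN <;> obtain ⟨d, hd⟩ := Nat.exists_eq_add_of_le hN
  · rw [hd, initialWord_add, subst_append, List.getD_append _ _ _ _ hi]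
  · rw [hd, initialWord_add x (i + 1), subst_append, List.getD_append _ _ _ _ hi']

lemma hasPrefix_substSeq {l : List (Fin 3)} (h : HasPrefix x l) :
    HasPrefix (substSeq n x) (subst n l) := by
  rw [← h]
  exact hasPrefix_substSeq_initialWord n x l.length

lemma shift_iterate_substSeq (n : ℕ) (x : Seq3) (k : ℕ) :
    shift^[(subst n (initialWord x k)).length] (substSeq n x) = substSeq n (shift^[k] x) := by
  funext i
  have hword := hasPrefix_substSeq_initialWord n x (k + (i + 1))
  rw [initialWord_add, subst_append, hasPrefix_append] at hword
  have hi : i < (subst n (initialWord (shift^[k] x) (i + 1))).length :=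
    Nat.lt_of_lt_of_le (by simp) (length_le_length_subst n _)
  rw [hword.2.apply_eq hi, (hasPrefix_substSeq_initialWord n (shift^[k] x) (i + 1)).apply_eq hi]

lemma hasPrefix_substSeq_digitBlock (n : ℕ) (x : Seq3) :
    HasPrefix (substSeq n x) (digitBlock n (x 0)) := by
  simpa [initialWord, subst] using hasPrefix_substSeq_initialWord n x 1

lemma shift_iterate_length_digitBlock_substSeq (n : ℕ) (x : Seq3) :
    shift^[(digitBlock n (x 0)).length] (substSeq n x) = substSeq n (shift x) := by
  simpa [initialWord, subst] using shift_iterate_substSeq n x 1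

lemma substSeq_apply_zero (n : ℕ) (x : Seq3) :
    substSeq n x 0 = if x 0 = 0 then 1 else 2 := by
  have h := hasPrefix_substSeq_digitBlock n x
  generalize x 0 = a at h
  fin_cases a <;> simpa [digitBlock, hasPrefix_cons] using h.apply_eq (length_digitBlock_pos n _)

lemma substSeq_apply_zero_pos (n : ℕ) (x : Seq3) : 0 < substSeq n x 0 := by
  rw [substSeq_apply_zero]
  split_ifs <;> decide

lemma substSeq_lexLe_of_apply_zero_lt (h : x 0 < y 0) : lexLe (substSeq n x) (substSeq n y) := by
  have hcases : (x 0 = 0 ∧ y 0 ≠ 0) ∨ (x 0 = 1 ∧ y 0 = 2) := by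
    generalize x 0 = a, y 0 = b at h ⊢
    revert a b
    decide
  rcases hcases with ⟨hx, hy⟩ | ⟨hx, hy⟩
  · exact lexLe_of_apply_zero_lt (by simp [substSeq_apply_zero, hx, hy])
  · have hblock : digitBlock n 1 = digitBlock n 2 ++ [0] := by
      simp [digitBlock, List.replicate_succ']
    have hpx := hasPrefix_substSeq_digitBlock n x
    have hpy := hasPrefix_substSeq_digitBlock n y
    have hshift := shift_iterate_length_digitBlock_substSeq n y
    rw [hx, hblock, hasPrefix_append, hasPrefix_cons] at hpx
    rw [hy] at hpy hshift
    refine lexLe_of_hasPrefix hpx.1 hpy (lexLe_of_apply_zero_lt ?_)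
    rw [hpx.2.1, hshift]
    exact substSeq_apply_zero_pos _ _

lemma substSeq_lexLe_substSeq (h : lexLe x y) : lexLe (substSeq n x) (substSeq n y) := by
  rcases h with rfl | ⟨m, heq, hlt⟩
  · exact Or.inl rfl
  · have hpx := hasPrefix_substSeq_initialWord n x m
    have hpy := hasPrefix_substSeq_initialWord n y m
    have hx := shift_iterate_substSeq n x m
    have hy := shift_iterate_substSeq n y m
    rw [← initialWord_congr heq] at hpy hy
    refine lexLe_of_hasPrefix hpx hpy ?_
    rw [hx, hy]
    exact substSeq_lexLe_of_apply_zero_lt (by simpa [shift_iterate_apply] using hlt)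

lemma exists_eq_length_subst_add (n : ℕ) (x : Seq3) (i : ℕ) :
    ∃ k, ∃ j < (digitBlock n (x k)).length, i = (subst n (initialWord x k)).length + j := by
  induction i with
  | zero => exact ⟨0, 0, length_digitBlock_pos n _, rfl⟩
  | succ i ih =>
    obtain ⟨k, j, hj, hi⟩ := ih
    rcases Nat.lt_or_ge (j + 1) (digitBlock n (x k)).length with hj' | hj'
    · exact ⟨k, j + 1, hj', by lia⟩
    · refine ⟨k + 1, 0, length_digitBlock_pos n _, ?_⟩
      rw [initialWord_succ_last, subst_append, List.length_append]
      simp only [subst, List.flatMap_singleton] at hi ⊢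
      lia

lemma digitBlock_getElem_of_pos (n : ℕ) (a : Fin 3) {j : ℕ} (hj : j < (digitBlock n a).length)
    (hpos : 0 < j) : (digitBlock n a)[j] = 0 := by
  obtain ⟨j, rfl⟩ := Nat.exists_eq_succ_of_ne_zero hpos.ne'
  fin_cases a <;> simp [digitBlock] at hj ⊢

lemma substSeq_mem_MaxSet (hx : x ∈ MaxSet) : substSeq n x ∈ MaxSet := by
  have hzero : substSeq n x 0 = 2 := by simp [substSeq_apply_zero, hx.1]
  refine ⟨hzero, fun r => ?_⟩
  obtain ⟨k, j, hj, rfl⟩ := exists_eq_length_subst_add n x r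
  rw [add_comm, Function.iterate_add_apply, shift_iterate_substSeq]
  rcases Nat.eq_zero_or_pos j with rfl | hpos
  · exact substSeq_lexLe_substSeq (hx.2 k)
  · have hp := hasPrefix_substSeq_digitBlock n (shift^[k] x)
    rw [shift_iterate_apply, add_zero] at hp
    apply lexLe_of_apply_zero_lt
    rw [shift_iterate_apply, add_zero, hp.apply_eq hj, digitBlock_getElem_of_pos n _ hj hpos, hzero]
    decide

lemma boundedDiscrepancy_of_exists_smul {β : Fin 3 → ℝ} (hsum : ∑ i, β i = 1) {C : ℝ}
    (h : ∀ N, ∃ t : ℝ, ‖birk x N - t • β‖ ≤ C) : BoundedDiscrepancy x β := by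
  refine ⟨C + 3 * C * ‖β‖, fun N => ?_⟩
  obtain ⟨t, ht⟩ := h N
  have hsub : ∑ i, (birk x N - t • β) i = N - t := by
    simp [Finset.sum_sub_distrib, sum_birk, ← Finset.mul_sum, hsum]
  have hNt : ‖(N - t : ℝ)‖ ≤ 3 * C := by
    rw [← hsub]
    refine (norm_sum_le_of_le _ fun i _ => (norm_le_pi_norm _ i).trans ht).trans_eq ?_
    simp
  have hsplit : birk x N - (N : ℝ) • β = (birk x N - t • β) - (N - t : ℝ) • β := by module
  rw [hsplit]
  refine (norm_sub_le _ _).trans (add_le_add ht ?_)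
  rw [norm_smul]
  gcongr

lemma length_digitBlock_le (n : ℕ) (a : Fin 3) : (digitBlock n a).length ≤ n + 2 := by
  fin_cases a <;> simp [digitBlock]

lemma boundedDiscrepancy_substSeq {β : Fin 3 → ℝ} {c : ℝ} (hsum : ∑ i, β i = 1)
    (h : BoundedDiscrepancy x (c • desubst n β)) : BoundedDiscrepancy (substSeq n x) β := by
  obtain ⟨C, hC⟩ := h
  let A : (Fin 3 → ℝ) →L[ℝ] (Fin 3 → ℝ) := (desubst n).symm.toLinearMap.toContinuousLinearMap
  refine boundedDiscrepancy_of_exists_smul hsum (C := ‖A‖ * C + (n + 2)) fun N => ?_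
  obtain ⟨k, j, hj, rfl⟩ := exists_eq_length_subst_add n x N
  refine ⟨k * c, ?_⟩
  have hblocks : birk (substSeq n x) (subst n (initialWord x k)).length = A (birk x k) := by
    rw [(hasPrefix_substSeq_initialWord n x k).birk_eq, birk_eq_parikh]
    exact ((desubst n).symm_apply_eq.2 (desubst_parikh_subst n _).symm).symm
  have hβ : (k * c) • β = A ((k : ℝ) • c • desubst n β) := by
    simp [A, mul_smul]
  rw [birk_add, hblocks, hβ, add_sub_right_comm, ← map_sub]
  refine (norm_add_le _ _).trans (add_le_add ?_ ?_)
  · exact (A.le_opNorm _).trans (by gcongr; exact hC k)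
  · refine (norm_birk_le _ j).trans ?_
    exact_mod_cast hj.le.trans (length_digitBlock_le n _)

end InfiniteSubstitution

section Itineraries

/-- The list `[n 0, …, n (r - 1)]`. -/
def itinPrefix (n : ℕ → ℕ) (r : ℕ) : List ℕ := (List.range r).map n

lemma itinPrefix_succ (n : ℕ → ℕ) (r : ℕ) : itinPrefix n (r + 1) = itinPrefix n r ++ [n r] := by
  simp [itinPrefix, List.range_succ]

lemma itinPrefix_add (n : ℕ → ℕ) (r q : ℕ) :
    itinPrefix n (r + q) = itinPrefix n r ++ itinPrefix (fun k => n (r + k)) q := by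
  simp [itinPrefix, List.range_add, Function.comp_def]

lemma itinPrefix_succ_eq_cons (n : ℕ → ℕ) (r : ℕ) :
    itinPrefix n (r + 1) = n 0 :: itinPrefix (fun k => n (k + 1)) r := by
  simp [itinPrefix, List.range_succ_eq_map, Function.comp_def]

lemma iterDesubst_itinPrefix_succ (n : ℕ → ℕ) (r : ℕ) (v : Fin 3 → ℝ) :
    iterDesubst (itinPrefix n (r + 1)) v = desubst (n r) (iterDesubst (itinPrefix n r) v) := by
  rw [itinPrefix_succ, iterDesubst_append]
  rfl

/-- The vectors with coordinate sum `1` having itinerary `n` under the continued fraction map,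
that is, along which all the inverse branches prescribed by `n` stay in the positive cone. -/
def itinerarySet (n : ℕ → ℕ) : Set (Fin 3 → ℝ) :=
  {β | ∑ i, β i = 1 ∧ ∀ r i, 0 ≤ iterDesubst (itinPrefix n r) β i}

variable {n : ℕ → ℕ} {α β : Fin 3 → ℝ}

lemma iterDesubst_two_pos (h : β ∈ itinerarySet n) (r : ℕ) :
    0 < iterDesubst (itinPrefix n r) β 2 := by
  refine (h.2 r 2).lt_of_ne' fun hzero => ?_
  have h0 := h.2 r 0
  have h1 := h.2 r 1
  have hnext := h.2 (r + 1) 2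
  have hnext' := h.2 (r + 2) 2
  rw [iterDesubst_itinPrefix_succ, iterDesubst_itinPrefix_succ] at hnext'
  rw [iterDesubst_itinPrefix_succ] at hnext
  simp only [desubst_apply_zero, desubst_apply_two, hzero] at hnext hnext'
  have hzero0 : iterDesubst (itinPrefix n r) β 0 = 0 := by linarith
  have hzero1 : iterDesubst (itinPrefix n r) β 1 = 0 := by rw [hzero0] at hnext'; linarith
  have hβ : β = 0 := by
    refine (map_eq_zero_iff _ (iterDesubst (itinPrefix n r)).injective).1 (funext fun i => ?_)
    fin_cases i
    exacts [hzero0, hzero1, hzero]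
  simpa [hβ] using h.1

lemma mem_Delta'_of_mem_itinerarySet (h : β ∈ itinerarySet n) : β ∈ Delta' :=
  ⟨⟨h.2 0, (Fin.sum_univ_three β).symm.trans h.1⟩, iterDesubst_two_pos h 0⟩

lemma smul_desubst_mem_itinerarySet (h : β ∈ itinerarySet n) :
    (β 1 + β 2)⁻¹ • desubst (n 0) β ∈ itinerarySet fun k => n (k + 1) := by
  have hpos : 0 < β 1 + β 2 := add_pos_of_nonneg_of_pos (h.2 0 1) (iterDesubst_two_pos h 0)
  refine ⟨?_, fun r i => ?_⟩
  · simp only [Fin.sum_univ_three, Pi.smul_apply, smul_eq_mul, desubst_apply_zero,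
      desubst_apply_one, desubst_apply_two]
    field_simp
    ring
  · have hnonneg := h.2 (r + 1) i
    rw [itinPrefix_succ_eq_cons, iterDesubst_cons] at hnonneg
    rw [map_smul, Pi.smul_apply, smul_eq_mul]
    exact mul_nonneg (inv_nonneg.2 hpos.le) hnonneg

lemma exists_mem_MaxSet_hasPrefix_iterBlock (h : β ∈ itinerarySet n) (r : ℕ) :
    ∃ y ∈ MaxSet, BoundedDiscrepancy y β ∧ HasPrefix y (iterBlock (itinPrefix n r) 2) := by
  induction r generalizing n β with
  | zero =>
    obtain ⟨y, hy, hdisc⟩ :=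
      exists_mem_MaxSet_boundedDiscrepancy (h.2 0) h.1 (iterDesubst_two_pos h 0)
    exact ⟨y, hy, hdisc, hasPrefix_cons.2 ⟨hy.1, rfl⟩⟩
  | succ r ih =>
    obtain ⟨x, hx, hdisc, hprefix⟩ := ih (smul_desubst_mem_itinerarySet h)
    refine ⟨substSeq (n 0) x, substSeq_mem_MaxSet hx, boundedDiscrepancy_substSeq h.1 hdisc, ?_⟩
    rw [itinPrefix_succ_eq_cons]
    exact hasPrefix_substSeq hprefix

lemma desubst_floor_pos {v : Fin 3 → ℝ} (h : (∀ i, 0 ≤ v i) ∧ 0 < v 2) :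
    (∀ i, 0 ≤ desubst ⌊v 0 / v 2⌋₊ v i) ∧ 0 < desubst ⌊v 0 / v 2⌋₊ v 2 := by
  obtain ⟨hnonneg, hpos⟩ := h
  have hfloor := Nat.floor_le (div_nonneg (hnonneg 0) hpos.le)
  have hfloor' := Nat.lt_floor_add_one (v 0 / v 2)
  rw [le_div_iff₀ hpos] at hfloor
  rw [div_lt_iff₀ hpos] at hfloor'
  refine ⟨Fin.forall_fin_succ.2 ⟨hnonneg 1, Fin.forall_fin_two.2 ⟨?_, ?_⟩⟩, ?_⟩
  · exact sub_nonneg.2 hfloor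
  · exact sub_nonneg.2 hfloor'.le
  · exact sub_pos.2 hfloor'

lemma exists_mem_itinerarySet (h : α ∈ Delta') : ∃ n, α ∈ itinerarySet n := by
  let next (v : Fin 3 → ℝ) : Fin 3 → ℝ := desubst ⌊v 0 / v 2⌋₊ v
  let n (r : ℕ) : ℕ := ⌊next^[r] α 0 / next^[r] α 2⌋₊
  have horbit (r : ℕ) : iterDesubst (itinPrefix n r) α = next^[r] α := by
    induction r with
    | zero => rfl
    | succ r ih => rw [iterDesubst_itinPrefix_succ, ih, Function.iterate_succ_apply']
  have hpos (r : ℕ) : (∀ i, 0 ≤ next^[r] α i) ∧ 0 < next^[r] α 2 := by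
    induction r with
    | zero => exact ⟨h.1.1, h.2⟩
    | succ r ih =>
      rw [Function.iterate_succ_apply']
      exact desubst_floor_pos ih
  refine ⟨n, (Fin.sum_univ_three α).trans h.1.2, fun r => ?_⟩
  rw [horbit]
  exact (hpos r).1

end Itineraries

section InfimaxPrefixes

variable {n n' : ℕ → ℕ} {β β' : Fin 3 → ℝ} {J : Seq3}

lemma iterSubst_le_initialWord_of_isInfimax (h : β ∈ itinerarySet n) (hJ : IsInfimax β J) (r : ℕ) :
    iterSubst (itinPrefix n r) [2, 0] ≤
      initialWord J (iterSubst (itinPrefix n r) [2, 0]).length := by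
  rw [← zeroExtend_lexLe_iff]
  refine hJ.2.2.2 _ fun w ⟨hw, hfreq⟩ => ?_
  rw [zeroExtend_lexLe_iff]
  exact iterSubst_le_initialWord_of_mem_MaxSet hw hfreq _ (iterDesubst_two_pos h r)

lemma hasPrefix_iterBlock_of_isInfimax (h : β ∈ itinerarySet n) (hJ : IsInfimax β J) (r : ℕ) :
    HasPrefix J (iterBlock (itinPrefix n r) 2) := by
  obtain ⟨y, hy, hdisc, hprefix⟩ := exists_mem_MaxSet_hasPrefix_iterBlock h r
  refine hprefix.of_lexLe (hJ.2.2.1 y ⟨hy, hdisc.hasFreq⟩) ?_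
  have hle := iterSubst_le_initialWord_of_isInfimax h hJ r
  rw [iterSubst_cons_word] at hle
  exact le_initialWord_of_append_le hle

/-- At their first difference, the words `l` and `m` continue as `0…` and `1…`, or as `1…` and
`20…`. Unlike the lexicographic order,
this relation is preserved by all the substitutions `Λₙ`. -/
def SubstLt (l m : List (Fin 3)) : Prop :=
  ∃ p l' m', (l = p ++ 0 :: l' ∧ m = p ++ 1 :: m') ∨ (l = p ++ 1 :: l' ∧ m = p ++ 2 :: 0 :: m')

lemma SubstLt.subst {l m : List (Fin 3)} (h : SubstLt l m) (n : ℕ) :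
    SubstLt (subst n l) (subst n m) := by
  obtain ⟨p, l', m', ⟨rfl, rfl⟩ | ⟨rfl, rfl⟩⟩ := h
  · refine ⟨Infimax.subst n p, Infimax.subst n l',
      List.replicate n 0 ++ Infimax.subst n m', Or.inr ⟨?_, ?_⟩⟩
    · simp [subst_append, subst_cons, digitBlock]
    · simp [subst_append, subst_cons, digitBlock, List.replicate_succ]
  · refine ⟨Infimax.subst n p ++ 2 :: List.replicate n 0, Infimax.subst n l',
      Infimax.subst n m', Or.inl ⟨?_, ?_⟩⟩
    · simp [subst_append, subst_cons, digitBlock, List.replicate_succ']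
    · simp [subst_append, subst_cons, digitBlock]

lemma SubstLt.iterSubst {l m : List (Fin 3)} (h : SubstLt l m) (ns : List ℕ) :
    SubstLt (iterSubst ns l) (iterSubst ns m) := by
  induction ns with
  | nil => exact h
  | cons n ns ih => exact ih.subst n

lemma SubstLt.not_le_initialWord {l m : List (Fin 3)} (h : SubstLt l m) (hl : HasPrefix J l) :
    ¬ m ≤ initialWord J m.length := by
  intro hm
  obtain ⟨p, a, b, l', m', hab, rfl, rfl⟩ :
      ∃ p a b l' m', a < b ∧ l = (p ++ [a]) ++ l' ∧ m = (p ++ [b]) ++ m' := by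
    obtain ⟨p, l', m', ⟨rfl, rfl⟩ | ⟨rfl, rfl⟩⟩ := h
    · exact ⟨p, 0, 1, l', m', by decide, by simp, by simp⟩
    · exact ⟨p, 1, 2, l', 0 :: m', by decide, by simp, by simp⟩
  have hle := le_initialWord_of_append_le hm
  have hpre := (hasPrefix_append.1 hl).1
  rw [HasPrefix, List.length_append, List.length_singleton] at hpre
  rw [List.length_append, List.length_singleton, hpre, word_append_le_append_iff,
    word_cons_le_cons_iff] at hle
  grind

lemma le_of_isInfimax_of_itinPrefix_eq (h : β ∈ itinerarySet n) (h' : β' ∈ itinerarySet n')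
    (hJ : IsInfimax β J) (hJ' : IsInfimax β' J) {r : ℕ} (hr : itinPrefix n r = itinPrefix n' r) :
    n' r ≤ n r := by
  by_contra! hlt
  have hle := iterSubst_le_initialWord_of_isInfimax h hJ (r + 1)
  have hprefix := hasPrefix_iterBlock_of_isInfimax h' hJ' (r + 1)
  rw [itinPrefix_succ, hr, iterSubst_append_left] at hle
  rw [itinPrefix_succ, iterBlock, iterSubst_append_left] at hprefix
  refine (SubstLt.iterSubst ?_ _).not_le_initialWord hprefix hle
  obtain ⟨d, hd⟩ := Nat.exists_eq_add_of_lt hlt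
  refine ⟨2 :: List.replicate (n r) 0, List.replicate d 0, [], Or.inl ⟨?_, ?_⟩⟩
  · simp [iterSubst, subst, digitBlock, hd, add_assoc, List.replicate_succ,
      ← List.replicate_append_replicate]
  · simp [iterSubst, subst, digitBlock]

lemma itinerary_eq_of_isInfimax (h : β ∈ itinerarySet n) (h' : β' ∈ itinerarySet n')
    (hJ : IsInfimax β J) (hJ' : IsInfimax β' J) : n = n' := by
  have heq (r : ℕ) (hr : itinPrefix n r = itinPrefix n' r) : n r = n' r :=
    (le_of_isInfimax_of_itinPrefix_eq h' h hJ' hJ hr.symm).antisymm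
      (le_of_isInfimax_of_itinPrefix_eq h h' hJ hJ' hr)
  have hprefix (r : ℕ) : itinPrefix n r = itinPrefix n' r := by
    induction r with
    | zero => rfl
    | succ r ih => rw [itinPrefix_succ, itinPrefix_succ, ih, heq r ih]
  exact funext fun r => heq r (hprefix r)

end InfimaxPrefixes

section BlockLengths

/-- The length of the image of the digit `i` under the first `r` substitutions of `n`. -/
def blockLength (n : ℕ → ℕ) (r : ℕ) (i : Fin 3) : ℕ := (iterBlock (itinPrefix n r) i).length

lemma iterBlock_itinPrefix_succ (n : ℕ → ℕ) (r : ℕ) (i : Fin 3) :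
    iterBlock (itinPrefix n (r + 1)) i = iterSubst (itinPrefix n r) (digitBlock (n r) i) := by
  rw [iterBlock, itinPrefix_succ, iterSubst_append_left]
  simp [iterSubst, subst]

lemma length_iterSubst_replicate (ns : List ℕ) (k : ℕ) (a : Fin 3) :
    (iterSubst ns (List.replicate k a)).length = k * (iterBlock ns a).length := by
  induction k with
  | zero => simp [iterSubst_nil]
  | succ k ih => rw [List.replicate_succ, iterSubst_cons_word, List.length_append, ih]; ring

variable (n : ℕ → ℕ) (r : ℕ)

lemma blockLength_succ_zero : blockLength n (r + 1) 0 = blockLength n r 1 := by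
  rw [blockLength, iterBlock_itinPrefix_succ]
  rfl

lemma blockLength_succ_one :
    blockLength n (r + 1) 1 = blockLength n r 2 + (n r + 1) * blockLength n r 0 := by
  rw [blockLength, iterBlock_itinPrefix_succ, digitBlock, iterSubst_cons_word, List.length_append,
    length_iterSubst_replicate]
  rfl

lemma blockLength_succ_two :
    blockLength n (r + 1) 2 = blockLength n r 2 + n r * blockLength n r 0 := by
  rw [blockLength, iterBlock_itinPrefix_succ, digitBlock, iterSubst_cons_word, List.length_append,
    length_iterSubst_replicate]
  rfl

lemma blockLength_pos (i : Fin 3) : 0 < blockLength n r i := by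
  induction r generalizing i with
  | zero => exact Nat.one_pos
  | succ r ih =>
    have h0 := ih 0
    have h1 := ih 1
    have h2 := ih 2
    fin_cases i <;> simp only [Fin.zero_eta, Fin.mk_one, Fin.reduceFinMk, blockLength_succ_zero,
      blockLength_succ_one, blockLength_succ_two] <;> lia

lemma monotone_blockLength_two : Monotone fun r => blockLength n r 2 :=
  monotone_nat_of_le_succ fun r => by rw [blockLength_succ_two]; lia

lemma le_blockLength_zero {k : ℕ} (h : 2 * k ≤ r) : k ≤ blockLength n r 0 := by
  induction k generalizing r with
  | zero => lia
  | succ k ih =>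
    obtain ⟨q, rfl⟩ : ∃ q, r = q + 2 := ⟨r - 2, by lia⟩
    have hq := ih q (by lia)
    have hpos := blockLength_pos n q 2
    rw [blockLength_succ_zero, blockLength_succ_one, add_mul, one_mul]
    lia

/-- The itinerary `n` has infinitely many nonzero terms at even and at odd positions. This is what
makes the blocks of the digit `2` grow. -/
def NonzeroAtBothParities (n : ℕ → ℕ) : Prop := ∀ R, ∃ d, n (R + 2 * d) ≠ 0

variable {n}

lemma tendsto_blockLength (h : NonzeroAtBothParities n) (i : Fin 3) :
    Tendsto (fun r => blockLength n r i) atTop atTop := by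
  have hzero : Tendsto (fun r => blockLength n r 0) atTop atTop :=
    tendsto_atTop_atTop.2 fun k => ⟨2 * k, fun r hr => le_blockLength_zero n r hr⟩
  fin_cases i
  · exact hzero
  · simpa [Function.comp_def, blockLength_succ_zero] using hzero.comp (tendsto_add_atTop_nat 1)
  · refine tendsto_atTop_atTop_of_monotone (monotone_blockLength_two n) fun k => ?_
    induction k with
    | zero => exact ⟨0, Nat.zero_le _⟩
    | succ k ih =>
      obtain ⟨r, hr⟩ := ih
      obtain ⟨d, hd⟩ := h r
      have hmono := monotone_blockLength_two n (Nat.le_add_right r (2 * d))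
      have hpos := Nat.mul_pos (Nat.pos_of_ne_zero hd) (blockLength_pos n (r + 2 * d) 0)
      refine ⟨r + 2 * d + 1, ?_⟩
      simp only [Fin.reduceFinMk, blockLength_succ_two] at hr hmono ⊢
      lia

end BlockLengths

section ExceptionalItineraries

variable {n : ℕ → ℕ} {α α' β : Fin 3 → ℝ} {J : Seq3}

lemma isInfimax_of_mem_itinerarySet (hα : α ∈ itinerarySet n) (hJ : IsInfimax α J)
    (hn : NonzeroAtBothParities n) (hβ : β ∈ itinerarySet n) : IsInfimax β J := by
  have hlong (N : ℕ) : ∃ r, N ≤ (iterBlock (itinPrefix n r) 2).length :=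
    ((tendsto_blockLength hn 2).eventually_ge_atTop N).exists
  have hJr (r : ℕ) : initialWord J (iterBlock (itinPrefix n r) 2).length = _ :=
    hasPrefix_iterBlock_of_isInfimax hα hJ r
  refine ⟨?_, hJ.2.1, fun w ⟨hw, hfreq⟩ => ?_, fun b hb => ?_⟩
  · obtain ⟨y, hy, hdisc, -⟩ := exists_mem_MaxSet_hasPrefix_iterBlock hβ 0
    exact ⟨y, hy, hdisc.hasFreq⟩
  · refine lexLe_of_frequently_initialWord_le fun N => ?_
    obtain ⟨r, hr⟩ := hlong N
    refine ⟨_, hr, (hJr r).trans_le ?_⟩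
    refine le_initialWord_of_append_le (m := iterBlock (itinPrefix n r) 0) ?_
    exact iterSubst_append (itinPrefix n r) [2] [0] ▸
      iterSubst_le_initialWord_of_mem_MaxSet hw hfreq _ (iterDesubst_two_pos hβ r)
  · refine lexLe_of_frequently_initialWord_le fun N => ?_
    obtain ⟨r, hr⟩ := hlong N
    obtain ⟨y, hy, hdisc, hprefix⟩ := exists_mem_MaxSet_hasPrefix_iterBlock hβ r
    refine ⟨_, hr, (initialWord_le_of_lexLe (hb y ⟨hy, hdisc.hasFreq⟩) _).trans_eq ?_⟩
    exact hprefix.trans (hJr r).symm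

section VanishingParity

variable {R : ℕ}

lemma iterDesubst_itinPrefix_add_two_mul_succ (hn : ∀ d, n (R + 2 * d) = 0)
    (v : Fin 3 → ℝ) (d : ℕ) :
    iterDesubst (itinPrefix n (R + 2 * (d + 1))) v =
      desubst (n (R + 2 * d + 1)) (desubst 0 (iterDesubst (itinPrefix n (R + 2 * d)) v)) := by
  rw [show R + 2 * (d + 1) = R + 2 * d + 1 + 1 by ring, iterDesubst_itinPrefix_succ,
    iterDesubst_itinPrefix_succ, hn]

lemma iterDesubst_zero_eq (hn : ∀ d, n (R + 2 * d) = 0) (v : Fin 3 → ℝ) (d : ℕ) :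
    iterDesubst (itinPrefix n (R + 2 * d)) v 0 = iterDesubst (itinPrefix n R) v 0 := by
  induction d with
  | zero => rfl
  | succ d ih => simp [iterDesubst_itinPrefix_add_two_mul_succ hn, ih]

lemma exists_tendsto_iterDesubst (hn : ∀ d, n (R + 2 * d) = 0) (hβ : β ∈ itinerarySet n) :
    iterDesubst (itinPrefix n R) β 0 = 0 ∧
      Tendsto (fun d => iterDesubst (itinPrefix n (R + 2 * d)) β 1) atTop (𝓝 0) ∧
      ∃ l, Tendsto (fun d => iterDesubst (itinPrefix n (R + 2 * d)) β 2) atTop (𝓝 l) := by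
  set v : ℕ → Fin 3 → ℝ := fun d => iterDesubst (itinPrefix n (R + 2 * d)) β
  have hnonneg (d : ℕ) (i : Fin 3) : 0 ≤ v d i := hβ.2 _ i
  have hdrop (d : ℕ) : v 0 0 + v (d + 1) 1 = v d 2 - v (d + 1) 2 := by
    have hzero : v 0 0 = v d 0 := (iterDesubst_zero_eq hn β d).symm
    rw [hzero]
    simp only [v, iterDesubst_itinPrefix_add_two_mul_succ hn, desubst_apply_zero,
      desubst_apply_one, desubst_apply_two]
    push_cast
    ring
  have hanti : Antitone fun d => v d 2 :=
    antitone_nat_of_succ_le fun d => by linarith [hdrop d, hnonneg 0 0, hnonneg (d + 1) 1]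
  have hlim := tendsto_atTop_ciInf hanti ⟨0, Set.forall_mem_range.2 fun d => hnonneg d 2⟩
  have hsum : Tendsto (fun d => v 0 0 + v (d + 1) 1) atTop (𝓝 0) := by
    simpa [hdrop] using hlim.sub (hlim.comp (tendsto_add_atTop_nat 1))
  have hzero : v 0 0 = 0 :=
    (ge_of_tendsto' hsum fun d => le_add_of_nonneg_right (hnonneg _ 1)).antisymm (hnonneg 0 0)
  refine ⟨hzero, (tendsto_add_atTop_iff_nat 1).1 ?_, _, hlim⟩
  simpa [hzero] using hsum

lemma iterDesubst_cross_eq (hn : ∀ d, n (R + 2 * d) = 0)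
    (hα : iterDesubst (itinPrefix n R) α 0 = 0) (hα' : iterDesubst (itinPrefix n R) α' 0 = 0)
    (d : ℕ) :
    iterDesubst (itinPrefix n (R + 2 * d)) α 1 * iterDesubst (itinPrefix n (R + 2 * d)) α' 2 -
        iterDesubst (itinPrefix n (R + 2 * d)) α 2 * iterDesubst (itinPrefix n (R + 2 * d)) α' 1 =
      iterDesubst (itinPrefix n R) α 1 * iterDesubst (itinPrefix n R) α' 2 -
        iterDesubst (itinPrefix n R) α 2 * iterDesubst (itinPrefix n R) α' 1 := by
  induction d with
  | zero => rfl
  | succ d ih =>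
    rw [← ih]
    simp only [iterDesubst_itinPrefix_add_two_mul_succ hn, desubst_apply_zero, desubst_apply_one,
      desubst_apply_two, iterDesubst_zero_eq hn, hα, hα']
    push_cast
    ring

-- The plane determinant of the two renormalized vectors is constant along the orbit and tends to 0.
lemma eq_of_mem_itinerarySet_of_vanishing (hn : ∀ d, n (R + 2 * d) = 0)
    (hα : α ∈ itinerarySet n) (hα' : α' ∈ itinerarySet n) : α = α' := by
  obtain ⟨hα0, hα1, a, ha⟩ := exists_tendsto_iterDesubst hn hα
  obtain ⟨hα0', hα1', a', ha'⟩ := exists_tendsto_iterDesubst hn hα'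
  set u := iterDesubst (itinPrefix n R) α
  set u' := iterDesubst (itinPrefix n R) α'
  have hcross : u 1 * u' 2 - u 2 * u' 1 = 0 := by
    refine tendsto_nhds_unique (tendsto_const_nhds.congr fun d => ?_)
      (((hα1.mul ha').sub (ha.mul hα1')).trans_eq (by simp))
    exact (iterDesubst_cross_eq hn hα0 hα0' d).symm
  have hprop : u' 2 • α = u 2 • α' := by
    apply (iterDesubst (itinPrefix n R)).injective
    rw [map_smul, map_smul]
    funext i
    fin_cases i
    · simp [u, u', hα0, hα0']
    · exact (by linarith : u' 2 * u 1 = u 2 * u' 1)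
    · exact mul_comm _ _
  have hscale : u' 2 = u 2 := by
    simpa [← Finset.mul_sum, hα.1, hα'.1] using congrArg (fun v => ∑ i, v i) hprop
  rw [hscale] at hprop
  exact smul_right_injective _ (iterDesubst_two_pos hα R).ne' hprop

end VanishingParity

lemma nonzeroAtBothParities_of_ne (hα : α ∈ itinerarySet n) (hα' : α' ∈ itinerarySet n)
    (hne : α ≠ α') : NonzeroAtBothParities n := by
  intro R
  by_contra! hn
  exact hne (eq_of_mem_itinerarySet_of_vanishing hn hα hα')

end ExceptionalItineraries

section BlockOccurrences

variable {n : ℕ → ℕ}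

lemma mem_iterBlock_itinPrefix_succ {r q : ℕ} {i j : Fin 3}
    (hi : i ∈ iterBlock (itinPrefix (fun k => n (r + 1 + k)) q) 2) (hj : j ∈ digitBlock (n r) i) :
    j ∈ iterBlock (itinPrefix (fun k => n (r + k)) (q + 1)) 2 := by
  have htail : (fun k => n (r + (k + 1))) = fun k => n (r + 1 + k) :=
    funext fun k => congrArg n (by ring)
  rw [itinPrefix_succ_eq_cons, htail, iterBlock, iterSubst_cons, subst, List.mem_flatMap]
  exact ⟨i, hi, hj⟩

lemma exists_zero_mem_iterBlock (d : ℕ) {r : ℕ} (h : n (r + 2 * d) ≠ 0) :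
    ∃ q, 0 ∈ iterBlock (itinPrefix (fun k => n (r + k)) q) 2 := by
  induction d generalizing r with
  | zero =>
    refine ⟨1, mem_iterBlock_itinPrefix_succ (i := 2) ?_ ?_⟩
    · simp [itinPrefix, iterBlock, iterSubst]
    · simpa [digitBlock] using h
  | succ d ih =>
    obtain ⟨q, hq⟩ := ih (r := r + 2) (by rwa [show r + 2 + 2 * d = r + 2 * (d + 1) by ring])
    refine ⟨q + 2, mem_iterBlock_itinPrefix_succ (i := 1) ?_ (by simp [digitBlock])⟩
    exact mem_iterBlock_itinPrefix_succ hq (by simp [digitBlock])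

lemma NonzeroAtBothParities.exists_mem_iterBlock (h : NonzeroAtBothParities n) (r : ℕ)
    (i : Fin 3) : ∃ q, i ∈ iterBlock (itinPrefix (fun k => n (r + k)) q) 2 := by
  have hzero (r : ℕ) : ∃ q, 0 ∈ iterBlock (itinPrefix (fun k => n (r + k)) q) 2 :=
    let ⟨d, hd⟩ := h r
    exists_zero_mem_iterBlock d hd
  fin_cases i
  · exact hzero r
  · obtain ⟨q, hq⟩ := hzero (r + 1)
    exact ⟨q + 1, mem_iterBlock_itinPrefix_succ hq (by simp [digitBlock])⟩
  · exact ⟨0, by simp [itinPrefix, iterBlock, iterSubst]⟩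

lemma exists_hasPrefix_iterBlock {J : Seq3} (hn : NonzeroAtBothParities n)
    (hJ : ∀ r, HasPrefix J (iterBlock (itinPrefix n r) 2)) (r : ℕ) (i : Fin 3) :
    ∃ k, HasPrefix (shift^[k] J) (iterBlock (itinPrefix n r) i) := by
  obtain ⟨q, hq⟩ := hn.exists_mem_iterBlock r i
  obtain ⟨u, v, huv⟩ := List.append_of_mem hq
  have hprefix := hJ (r + q)
  rw [itinPrefix_add, iterBlock, iterSubst_append_left, ← iterBlock, huv, iterSubst_append,
    iterSubst_cons_word, hasPrefix_append, hasPrefix_append] at hprefix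
  exact ⟨_, hprefix.2.1⟩

end BlockOccurrences

section Segments

variable {E : Type*} [NormedAddCommGroup E] [NormedSpace ℝ E]

lemma exists_eq_segment_of_subset_line {S : Set E} (hconv : Convex ℝ S) (hcomp : IsCompact S)
    {a b : E} (ha : a ∈ S) (hb : b ∈ S) (hab : a ≠ b)
    (hline : S ⊆ Set.range (AffineMap.lineMap (k := ℝ) a b)) :
    ∃ p q, p ≠ q ∧ S = segment ℝ p q := by
  set f : ℝ →ᵃ[ℝ] E := AffineMap.lineMap a b
  have hf : IsClosedEmbedding f :=
    (antilipschitzWith_lineMap hab).isClosedEmbedding (lipschitzWith_lineMap a b).uniformContinuous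
  have hpre_ne : (f ⁻¹' S).Nonempty := ⟨0, by simpa [f] using ha⟩
  have hpre_conn : IsConnected (f ⁻¹' S) := ⟨hpre_ne, (hconv.affine_preimage f).isPreconnected⟩
  obtain ⟨t, u, htu, hpre⟩ : ∃ t u, t ≤ u ∧ f ⁻¹' S = Set.Icc t u := by
    have hIcc := eq_Icc_of_connected_compact hpre_conn (hf.isCompact_preimage hcomp)
    exact ⟨_, _, Set.nonempty_Icc.1 (hIcc ▸ hpre_ne), hIcc⟩
  have hS : S = segment ℝ (f t) (f u) := by
    rw [← image_segment, segment_eq_Icc htu, ← hpre,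
      Set.image_preimage_eq_of_subset hline]
  refine ⟨f t, f u, fun htu_eq => hab ?_, hS⟩
  rw [htu_eq, segment_same] at hS
  rw [hS] at ha hb
  exact ha.trans hb.symm

lemma left_mem_exposedPoints_segment {p q : E} (h : p ≠ q) :
    p ∈ (segment ℝ p q).exposedPoints ℝ := by
  obtain ⟨l, hl⟩ := SeparatingDual.exists_separating_of_ne (R := ℝ) h
  wlog hlt : l q < l p generalizing l
  · exact this (-l) (by simpa using hl) (by simpa using hl.lt_of_le (not_lt.1 hlt))
  refine ⟨left_mem_segment ℝ p q, l, ?_⟩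
  rintro _ ⟨s, t, hs, ht, hst, rfl⟩
  obtain rfl : s = 1 - t := by linarith
  simp only [map_add, map_smul, smul_eq_mul]
  refine ⟨by nlinarith, fun hle => ?_⟩
  obtain rfl : t = 0 := by nlinarith
  simp

lemma right_mem_exposedPoints_segment {p q : E} (h : p ≠ q) :
    q ∈ (segment ℝ p q).exposedPoints ℝ :=
  segment_symm ℝ p q ▸ left_mem_exposedPoints_segment h.symm

lemma extremePoints_segment {p q : E} (h : p ≠ q) :
    (segment ℝ p q).extremePoints ℝ = {p, q} := by
  refine Set.Subset.antisymm (fun x hx => ?_) ?_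
  · rw [← insert_endpoints_openSegment] at hx
    rcases hx.1 with rfl | rfl | hopen
    · exact Or.inl rfl
    · exact Or.inr rfl
    · exact Or.inl (hx.2 (Or.inl rfl) (Or.inr (Or.inl rfl)) hopen).symm
  · rintro _ (rfl | rfl)
    · exact exposedPoints_subset_extremePoints (left_mem_exposedPoints_segment h)
    · exact exposedPoints_subset_extremePoints (right_mem_exposedPoints_segment h)

lemma injOn_segment_of_ne (l : E →ₗ[ℝ] ℝ) {p q : E} (h : l p ≠ l q) :
    Set.InjOn l (segment ℝ p q) := by
  rintro _ ⟨s, t, -, -, hst, rfl⟩ _ ⟨s', t', -, -, hst', rfl⟩ heq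
  obtain rfl : s = 1 - t := by linarith
  obtain rfl : s' = 1 - t' := by linarith
  simp only [map_add, map_smul, smul_eq_mul] at heq
  obtain rfl : t = t' := mul_right_cancel₀ (sub_ne_zero.2 h) (by linarith)
  rfl

end Segments

section ItinerarySegment

variable {n : ℕ → ℕ} {β : Fin 3 → ℝ}

lemma abs_det_iterDesubst (ns : List ℕ) (a b c : Fin 3 → ℝ) :
    |(Matrix.of ![iterDesubst ns a, iterDesubst ns b, iterDesubst ns c]).det| =
      |(Matrix.of ![a, b, c]).det| := by
  induction ns generalizing a b c with
  | nil => rfl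
  | cons n ns ih =>
    simp only [iterDesubst_cons]
    rw [ih, ← abs_neg]
    congr 1
    simp only [Matrix.det_fin_three, Matrix.of_apply, Matrix.cons_val, desubst_apply_zero,
      desubst_apply_one, desubst_apply_two]
    ring

lemma iterDesubst_mul_blockLength_le_one (h : β ∈ itinerarySet n) (r : ℕ) (i : Fin 3) :
    iterDesubst (itinPrefix n r) β i * blockLength n r i ≤ 1 := by
  rw [← h.1, sum_eq_sum_iterDesubst_mul_length (itinPrefix n r) β]
  exact Finset.single_le_sum (f := fun i => iterDesubst (itinPrefix n r) β i * blockLength n r i)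
    (fun i _ => mul_nonneg (h.2 r i) (Nat.cast_nonneg _)) (Finset.mem_univ i)

lemma tendsto_iterDesubst_zero (hn : NonzeroAtBothParities n) (h : β ∈ itinerarySet n) :
    Tendsto (fun r => iterDesubst (itinPrefix n r) β) atTop (𝓝 0) := by
  refine tendsto_pi_nhds.2 fun i => ?_
  refine squeeze_zero (fun r => h.2 r i) (fun r => ?_)
    (tendsto_inv_atTop_zero.comp (tendsto_natCast_atTop_atTop.comp (tendsto_blockLength hn i)))
  have hpos : (0 : ℝ) < blockLength n r i := Nat.cast_pos.2 (blockLength_pos n r i)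
  exact (le_inv_mul_iff₀ hpos).2 (mul_comm _ _ |>.trans_le
    (iterDesubst_mul_blockLength_le_one h r i)) |>.trans_eq (mul_one _)

lemma det_eq_zero_of_mem_itinerarySet (hn : NonzeroAtBothParities n) {a b c : Fin 3 → ℝ}
    (ha : a ∈ itinerarySet n) (hb : b ∈ itinerarySet n) (hc : c ∈ itinerarySet n) :
    (Matrix.of ![a, b, c]).det = 0 := by
  have hdet : Continuous fun v : (Fin 3 → ℝ) × (Fin 3 → ℝ) × (Fin 3 → ℝ) =>
      |(Matrix.of ![v.1, v.2.1, v.2.2]).det| := by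
    simp only [Matrix.det_fin_three, Matrix.of_apply, Matrix.cons_val]
    fun_prop
  have hlim := (hdet.tendsto (0, 0, 0)).comp <| (tendsto_iterDesubst_zero hn ha).prodMk_nhds <|
    (tendsto_iterDesubst_zero hn hb).prodMk_nhds (tendsto_iterDesubst_zero hn hc)
  simp only [Function.comp_def, abs_det_iterDesubst] at hlim
  exact abs_eq_zero.1 ((tendsto_nhds_unique tendsto_const_nhds hlim).trans
    (by simp [Matrix.det_fin_three]))

lemma mem_line_of_det_eq_zero {a b c : Fin 3 → ℝ} (ha : ∑ i, a i = 1) (hb : ∑ i, b i = 1)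
    (hc : ∑ i, c i = 1) (hab : a ≠ b) (hdet : (Matrix.of ![a, b, c]).det = 0) :
    c ∈ Set.range (AffineMap.lineMap (k := ℝ) a b) := by
  obtain ⟨v, hv, hrel⟩ := Matrix.exists_vecMul_eq_zero_iff.2 hdet
  have hrel' (i : Fin 3) : v 0 * a i + v 1 * b i + v 2 * c i = 0 := by
    simpa [Matrix.vecMul, dotProduct, Fin.sum_univ_three] using congrFun hrel i
  have hsum : v 0 + v 1 + v 2 = 0 := by
    rw [Fin.sum_univ_three] at ha hb hc
    linear_combination hrel' 0 + hrel' 1 + hrel' 2 - v 0 * ha - v 1 * hb - v 2 * hc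
  have hv2 : v 2 ≠ 0 := by
    intro hv2
    have hv1 : v 1 = -v 0 := by linarith
    have hv0 : v 0 ≠ 0 := fun hv0 => hv (by ext i; fin_cases i <;> simp [hv0, hv1, hv2])
    refine hab (funext fun i => mul_left_cancel₀ hv0 ?_)
    linear_combination hrel' i - b i * hv1 - c i * hv2
  refine ⟨-v 1 / v 2, funext fun i => ?_⟩
  simp only [AffineMap.lineMap_apply, vsub_eq_sub, vadd_eq_add, Pi.add_apply, Pi.smul_apply,
    Pi.sub_apply, smul_eq_mul]
  field_simp
  linear_combination a i * hsum - hrel' i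

lemma convex_itinerarySet (n : ℕ → ℕ) : Convex ℝ (itinerarySet n) := by
  rintro a ⟨ha, ha'⟩ b ⟨hb, hb'⟩ s t hs ht hst
  refine ⟨?_, fun r i => ?_⟩
  · simp [Finset.sum_add_distrib, ← Finset.mul_sum, ha, hb, hst]
  · rw [map_add, map_smul, map_smul]
    exact add_nonneg (mul_nonneg hs (ha' r i)) (mul_nonneg ht (hb' r i))

lemma isClosed_itinerarySet (n : ℕ → ℕ) : IsClosed (itinerarySet n) := by
  have hcont (r : ℕ) : Continuous (iterDesubst (itinPrefix n r)) :=
    (iterDesubst _).toLinearMap.continuous_of_finiteDimensional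
  simp only [itinerarySet, Set.ofPred_and, Set.ofPred_forall]
  refine (isClosed_eq (by fun_prop) continuous_const).inter ?_
  exact isClosed_iInter fun r => isClosed_iInter fun i =>
    isClosed_le continuous_const ((continuous_apply i).comp (hcont r))

lemma isCompact_itinerarySet (n : ℕ → ℕ) : IsCompact (itinerarySet n) := by
  refine (isCompact_stdSimplex ℝ (Fin 3)).of_isClosed_subset (isClosed_itinerarySet n) ?_
  exact fun β hβ => ⟨hβ.2 0, hβ.1⟩

lemma exists_itinerarySet_eq_segment {a b : Fin 3 → ℝ} (ha : a ∈ itinerarySet n)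
    (hb : b ∈ itinerarySet n) (hab : a ≠ b) :
    ∃ p q, p ≠ q ∧ itinerarySet n = segment ℝ p q :=
  have hn := nonzeroAtBothParities_of_ne ha hb hab
  exists_eq_segment_of_subset_line (convex_itinerarySet n) (isCompact_itinerarySet n) ha hb hab
    fun _ hc => mem_line_of_det_eq_zero ha.1 hb.1 hc.1 hab
      (det_eq_zero_of_mem_itinerarySet hn ha hb hc)

end ItinerarySegment

section Factorization

variable {A B : Type*} {f : A → List B} {K : ℕ}

lemma exists_eq_flatMap_append_of_prefix (hf : ∀ a, (f a).length ≤ K) {l : List A} {w v : List B}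
    (h : w ++ v = l.flatMap f) :
    ∃ (z : List A) (q : List B), w = z.flatMap f ++ q ∧ q.length ≤ K := by
  induction l generalizing w v with
  | nil => exact ⟨[], [], by simpa using (List.append_eq_nil_iff.1 h).1, by simp⟩
  | cons a l ih =>
    rw [List.flatMap_cons, List.append_eq_append_iff] at h
    rcases h with ⟨c, hfa, -⟩ | ⟨c, rfl, hl⟩
    · exact ⟨[], w, by simp, by grind⟩
    · obtain ⟨z, q, rfl, hq⟩ := ih hl.symm
      exact ⟨a :: z, q, by simp, hq⟩

lemma exists_eq_append_flatMap_append_of_infix (hf : ∀ a, (f a).length ≤ K) {l : List A}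
    {u w v : List B} (h : u ++ (w ++ v) = l.flatMap f) :
    ∃ (p : List B) (z : List A) (q : List B),
      w = p ++ (z.flatMap f ++ q) ∧ p.length ≤ K ∧ q.length ≤ K := by
  induction l generalizing u with
  | nil =>
    have hw : w = [] := (List.append_eq_nil_iff.1 (List.append_eq_nil_iff.1 h).2).1
    exact ⟨[], [], [], by simpa using hw, by simp, by simp⟩
  | cons a l ih =>
    rw [List.flatMap_cons, List.append_eq_append_iff] at h
    rcases h with ⟨c, hfa, hwv⟩ | ⟨c, -, hl⟩
    · have hc : c.length ≤ K := by grind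
      rcases List.append_eq_append_iff.1 hwv with ⟨d, rfl, -⟩ | ⟨d, rfl, hl⟩
      · exact ⟨w, [], [], by simp, by grind, by simp⟩
      · obtain ⟨z, q, rfl, hq⟩ := exists_eq_flatMap_append_of_prefix hf hl.symm
        exact ⟨c, z, q, rfl, hc, hq⟩
    · exact ih hl.symm

lemma iterSubst_eq_flatMap (ns : List ℕ) (l : List (Fin 3)) :
    iterSubst ns l = l.flatMap (iterBlock ns) := by
  induction l with
  | nil => rw [iterSubst_nil, List.flatMap_nil]
  | cons a l ih => rw [iterSubst_cons_word, ih, List.flatMap_cons]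

variable {n : ℕ → ℕ} {J : Seq3}

lemma initialWord_eq_append_iterSubst_append (hn : NonzeroAtBothParities n)
    (hJ : ∀ r, HasPrefix J (iterBlock (itinPrefix n r) 2)) {s : Seq3} (hs : s ∈ orbitClosure J)
    (r N : ℕ) :
    ∃ p z q, initialWord s N = p ++ (iterSubst (itinPrefix n r) z ++ q) ∧
      p.length ≤ ∑ i, blockLength n r i ∧ q.length ≤ ∑ i, blockLength n r i := by
  obtain ⟨k, hk⟩ := exists_initialWord_eq_of_mem_orbitClosure hs N
  obtain ⟨R, hR⟩ := eventually_atTop.1 ((tendsto_blockLength hn 2).eventually_ge_atTop (k + N))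
  obtain ⟨d, hd⟩ := Nat.exists_eq_add_of_le (hR (r + R) (Nat.le_add_left R r))
  have hprefix := hJ (r + R)
  rw [HasPrefix, ← blockLength, hd, initialWord_add, initialWord_add, hk, List.append_assoc,
    itinPrefix_add, iterBlock, iterSubst_append_left, iterSubst_eq_flatMap] at hprefix
  obtain ⟨p, z, q, hw, hp, hq⟩ := exists_eq_append_flatMap_append_of_infix
    (fun i => Finset.single_le_sum (f := blockLength n r) (fun _ _ => Nat.zero_le _)
      (Finset.mem_univ i)) hprefix
  exact ⟨p, z, q, by rw [hw, iterSubst_eq_flatMap], hp, hq⟩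

lemma norm_parikh_le (l : List (Fin 3)) : ‖parikh l‖ ≤ l.length := by
  rw [← (hasPrefix_zeroExtend l).birk_eq]
  exact norm_birk_le _ _

lemma exists_neg_le_iterDesubst_birk (hn : NonzeroAtBothParities n)
    (hJ : ∀ r, HasPrefix J (iterBlock (itinPrefix n r) 2)) (r : ℕ) (i : Fin 3) :
    ∃ C : ℝ, ∀ s ∈ orbitClosure J, ∀ N, -C ≤ iterDesubst (itinPrefix n r) (birk s N) i := by
  set L := (iterDesubstCoord (itinPrefix n r) i).toContinuousLinearMap
  set K := ∑ i, blockLength n r i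
  have hL (l : List (Fin 3)) (hl : l.length ≤ K) : -(‖L‖ * K) ≤ L (parikh l) :=
    neg_le_of_abs_le <| (L.le_opNorm _).trans <| by
      gcongr
      exact (norm_parikh_le l).trans (Nat.cast_le.2 hl)
  refine ⟨‖L‖ * K + ‖L‖ * K, fun s hs N => ?_⟩
  obtain ⟨p, z, q, hw, hp, hq⟩ := initialWord_eq_append_iterSubst_append hn hJ hs r N
  have hz : 0 ≤ L (parikh (iterSubst (itinPrefix n r) z)) := by
    change 0 ≤ iterDesubst _ _ i
    rw [iterDesubst_parikh_iterSubst]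
    exact parikh_nonneg z i
  change _ ≤ L (birk s N)
  rw [birk_eq_parikh, hw, parikh_append, parikh_append, map_add, map_add]
  linarith [hL p hp, hL q hq]

end Factorization

section FrequencySets

lemma apply_birk_eq_birkhoffSum (L : (Fin 3 → ℝ) →ₗ[ℝ] ℝ) (s : Seq3) (N : ℕ) :
    L (birk s N) = birkhoffSum shift (L ∘ kappa) N s :=
  map_birkhoffSum L shift kappa N s

lemma continuous_kappa : Continuous kappa := by
  simp only [funext kappa_eq_single]
  exact (continuous_of_discreteTopology (f := fun a : Fin 3 => (Pi.single a 1 : Fin 3 → ℝ))).comp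
    (continuous_apply 0)

lemma exists_subseq_tendsto_of_mem {X : Set Seq3} {s : ℕ → Seq3} {N : ℕ → ℕ} (hs : ∀ i, s i ∈ X)
    (hN : Tendsto N atTop atTop) :
    ∃ v ∈ DFMZ X, ∃ φ : ℕ → ℕ, StrictMono φ ∧
      Tendsto (fun i => (N (φ i) : ℝ)⁻¹ • birk (s (φ i)) (N (φ i))) atTop (𝓝 v) := by
  have hball (i : ℕ) : (N i : ℝ)⁻¹ • birk (s i) (N i) ∈ Metric.closedBall 0 1 := by
    rw [mem_closedBall_zero_iff, norm_smul, norm_inv, Real.norm_natCast]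
    exact (mul_le_mul_of_nonneg_left (norm_birk_le _ _) (by positivity)).trans inv_mul_le_one
  obtain ⟨v, -, φ, hφ, hv⟩ := (isCompact_closedBall _ _).tendsto_subseq hball
  exact ⟨v, ⟨s ∘ φ, N ∘ φ, fun i => hs _, hN.comp hφ.tendsto_atTop, hv⟩, φ, hφ, hv⟩

variable {ι : Type*} {l : Filter ι} {s : ι → Seq3} {N : ι → ℕ} {v : Fin 3 → ℝ}

lemma sum_eq_one_of_mem_DFMZ {X : Set Seq3} (h : v ∈ DFMZ X) : ∑ i, v i = 1 := by
  obtain ⟨s, N, -, hN, hv⟩ := h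
  refine tendsto_nhds_unique (tendsto_finsetSum _ fun i _ => tendsto_pi_nhds.1 hv i) ?_
  refine tendsto_const_nhds.congr' ?_
  filter_upwards [hN.eventually_gt_atTop 0] with i hi
  simp only [Pi.smul_apply, smul_eq_mul]
  rw [← Finset.mul_sum, sum_birk, inv_mul_cancel₀ (by positivity)]

lemma le_apply_of_forall_le_apply_birk [l.NeBot] (hN : Tendsto N l atTop)
    (L : (Fin 3 → ℝ) →ₗ[ℝ] ℝ) (h : Tendsto (fun i => (N i : ℝ)⁻¹ • birk (s i) (N i)) l (𝓝 v))
    {c C : ℝ} (hle : ∀ i, N i * c - C ≤ L (birk (s i) (N i))) : c ≤ L v := by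
  have hlim : Tendsto (fun i => c - (N i : ℝ)⁻¹ * C) l (𝓝 c) := by
    simpa using tendsto_const_nhds.sub
      ((tendsto_inv_atTop_zero.comp (tendsto_natCast_atTop_atTop.comp hN)).mul_const C)
  refine le_of_tendsto_of_tendsto hlim (tendsto_inv_mul_apply_birk L h) ?_
  filter_upwards [hN.eventually_gt_atTop 0] with i hi
  rw [le_inv_mul_iff₀ (by positivity), mul_sub, mul_inv_cancel_left₀ (by positivity)]
  exact hle i

lemma DFMZ_orbitClosure_subset_itinerarySet {n : ℕ → ℕ} {J : Seq3} (hn : NonzeroAtBothParities n)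
    (hJ : ∀ r, HasPrefix J (iterBlock (itinPrefix n r) 2)) :
    DFMZ (orbitClosure J) ⊆ itinerarySet n := by
  refine fun v hv => ⟨sum_eq_one_of_mem_DFMZ hv, fun r i => ?_⟩
  obtain ⟨s, N, hs, hN, hv⟩ := hv
  obtain ⟨C, hC⟩ := exists_neg_le_iterDesubst_birk hn hJ r i
  refine le_apply_of_forall_le_apply_birk (C := C) hN (iterDesubstCoord (itinPrefix n r) i) hv
    fun j => ?_
  rw [mul_zero, zero_sub]
  exact hC _ (hs j) _

end FrequencySets

section MaximizingOrbits

variable {Y : Type*} {T : Y → Y} {f : Y → ℝ}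

lemma exists_iterate_forall_le_birkhoffSum {x : Y} {B c : ℝ} (hB : ∀ k, f (T^[k] x) ≤ B)
    (hcB : c ≤ B) {m N : ℕ} (h : N * c + m * (B - c) < birkhoffSum T f N x) :
    ∃ k, ∀ j ≤ m, j * c ≤ birkhoffSum T f j (T^[k] x) := by
  obtain ⟨k, hk, hmin⟩ := Finset.exists_min_image (Finset.range (N + 1))
    (fun k => birkhoffSum T f k x - k * c) ⟨0, by simp⟩
  obtain ⟨d, rfl⟩ : ∃ d, N = k + d := Nat.exists_eq_add_of_le (by simpa [Nat.lt_succ_iff] using hk)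
  have hzero : birkhoffSum T f k x - k * c ≤ 0 := by simpa using hmin 0 (by simp)
  have htail : birkhoffSum T f d (T^[k] x) ≤ d * B := by
    calc birkhoffSum T f d (T^[k] x) ≤ ∑ _i ∈ Finset.range d, B :=
          Finset.sum_le_sum fun i _ => by rw [← Function.iterate_add_apply]; exact hB _
      _ = d * B := by simp
  have hmd : m ≤ d := by
    by_contra! hdm
    have hdm' : (d : ℝ) * (B - c) ≤ m * (B - c) := by
      gcongr
    rw [birkhoffSum_add] at h
    push_cast at h
    linarith
  refine ⟨k, fun j hj => ?_⟩
  have hkj := hmin (k + j) (Finset.mem_range.2 (by lia))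
  rw [birkhoffSum_add] at hkj
  push_cast at hkj
  linarith

variable [TopologicalSpace Y]

lemma continuous_birkhoffSum (hT : Continuous T) (hf : Continuous f) (N : ℕ) :
    Continuous (birkhoffSum T f N) :=
  continuous_finsetSum _ fun i _ => hf.comp (hT.iterate i)

variable {X : Set Y} {ι : Type*} {l : Filter ι} [l.NeBot] {s : ι → Y} {N : ι → ℕ} {c : ℝ}

lemma exists_forall_le_birkhoffSum_of_lt (hX : IsCompact X) (hTX : Set.MapsTo T X X)
    (hf : Continuous f) (hs : ∀ i, s i ∈ X) (hN : Tendsto N l atTop)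
    (h : Tendsto (fun i => (N i : ℝ)⁻¹ * birkhoffSum T f (N i) (s i)) l (𝓝 c)) {b : ℝ} (hbc : b < c)
    (m : ℕ) : ∃ x ∈ X, ∀ j ≤ m, j * b ≤ birkhoffSum T f j x := by
  obtain ⟨B, hB⟩ := (hX.image hf).bddAbove
  obtain ⟨a, hba, hac⟩ := exists_between hbc
  have hlarge : Tendsto (fun i => (N i : ℝ) * (a - b)) l atTop :=
    (tendsto_natCast_atTop_atTop.comp hN).atTop_mul_const (sub_pos.2 hba)
  obtain ⟨i, hi, hai, hNi⟩ := ((hN.eventually_gt_atTop 0).and ((h.eventually_const_lt hac).and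
    (hlarge.eventually_ge_atTop (m * (max B b - b))))).exists
  rw [lt_inv_mul_iff₀ (by positivity)] at hai
  obtain ⟨k, hk⟩ := exists_iterate_forall_le_birkhoffSum (T := T) (f := f) (x := s i)
    (B := max B b) (c := b) (m := m) (N := N i)
    (fun k => (hB ⟨_, hTX.iterate k (hs i), rfl⟩).trans (le_max_left _ _)) (le_max_right _ _)
    (by linarith)
  exact ⟨_, hTX.iterate k (hs i), hk⟩

lemma exists_forall_le_birkhoffSum [T2Space Y] (hX : IsCompact X) (hT : Continuous T)
    (hTX : Set.MapsTo T X X) (hf : Continuous f) (hs : ∀ i, s i ∈ X) (hN : Tendsto N l atTop)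
    (h : Tendsto (fun i => (N i : ℝ)⁻¹ * birkhoffSum T f (N i) (s i)) l (𝓝 c)) :
    ∃ x ∈ X, ∀ j : ℕ, j * c ≤ birkhoffSum T f j x := by
  obtain ⟨b, hb_mono, hb_lt, hb⟩ := exists_seq_strictMono_tendsto c
  set F : ℕ → Set Y := fun m => X ∩ ⋂ j ≤ m, {x | j * b m ≤ birkhoffSum T f j x}
  have hF_closed (m : ℕ) : IsClosed (F m) :=
    hX.isClosed.inter <| isClosed_biInter fun j _ =>
      isClosed_le continuous_const (continuous_birkhoffSum hT hf j)
  have hF_anti (m : ℕ) : F (m + 1) ⊆ F m := fun x hx => by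
    simp only [F, Set.mem_inter_iff, Set.mem_iInter, Set.mem_ofPred_eq] at hx ⊢
    exact ⟨hx.1, fun j hj => (mul_le_mul_of_nonneg_left (hb_mono m.lt_succ_self).le
      j.cast_nonneg).trans (hx.2 j (by lia))⟩
  have hF_nonempty (m : ℕ) : (F m).Nonempty := by
    obtain ⟨x, hxX, hx⟩ := exists_forall_le_birkhoffSum_of_lt hX hTX hf hs hN h (hb_lt m) m
    exact ⟨x, hxX, by simpa using hx⟩
  obtain ⟨x, hx⟩ := IsCompact.nonempty_iInter_of_sequence_nonempty_isCompact_isClosed F hF_anti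
    hF_nonempty (hX.of_isClosed_subset (hF_closed 0) Set.inter_subset_left) hF_closed
  simp only [F, Set.mem_iInter, Set.mem_inter_iff, Set.mem_ofPred_eq] at hx
  refine ⟨x, (hx 0).1, fun j => le_of_tendsto (hb.const_mul (j : ℝ)) ?_⟩
  filter_upwards [eventually_ge_atTop j] with m hm using (hx m).2 j hm

end MaximizingOrbits

section FrequencySegment

lemma mapsTo_shift_orbitClosure (J : Seq3) :
    Set.MapsTo shift (orbitClosure J) (orbitClosure J) := fun _ => shift_mem_orbitClosure

lemma exists_forall_le_apply_birk {X : Set Seq3} (hX : IsCompact X) (hσ : Set.MapsTo shift X X)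
    {p : Fin 3 → ℝ} (hp : p ∈ DFMZ X) (L : (Fin 3 → ℝ) →ₗ[ℝ] ℝ) :
    ∃ s ∈ X, ∀ N : ℕ, N * L p ≤ L (birk s N) := by
  obtain ⟨s, N, hs, hN, hv⟩ := hp
  have hlim := tendsto_inv_mul_apply_birk L hv
  simp only [apply_birk_eq_birkhoffSum] at hlim ⊢
  exact exists_forall_le_birkhoffSum hX continuous_shift hσ
    (L.continuous_of_finiteDimensional.comp continuous_kappa) hs hN hlim

lemma exists_hasFreq_of_mem_exposedPoints {X : Set Seq3} (hX : IsCompact X)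
    (hσ : Set.MapsTo shift X X) {p : Fin 3 → ℝ} (hp : p ∈ (DFMZ X).exposedPoints ℝ) :
    ∃ s ∈ X, hasFreq s p := by
  obtain ⟨hpX, L, hL⟩ := hp
  obtain ⟨s, hs, hmax⟩ := exists_forall_le_apply_birk hX hσ hpX L.toLinearMap
  refine ⟨s, hs, tendsto_of_subseq_tendsto fun N hN => ?_⟩
  obtain ⟨v, hv, φ, hφ, hlim⟩ := exists_subseq_tendsto_of_mem (fun _ => hs) hN
  have hle : L p ≤ L v := le_apply_of_forall_le_apply_birk (C := 0) (hN.comp hφ.tendsto_atTop)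
    L.toLinearMap hlim fun i => by simpa using hmax _
  exact ⟨φ, (hL v hv).2 hle ▸ hlim⟩

variable {n : ℕ → ℕ} {J : Seq3} {β p q : Fin 3 → ℝ}

lemma exists_blockLength_mul_le_apply_parikh (h : β ∈ itinerarySet n)
    (L : (Fin 3 → ℝ) →ₗ[ℝ] ℝ) (r : ℕ) :
    ∃ i, blockLength n r i * L β ≤ L (parikh (iterBlock (itinPrefix n r) i)) := by
  set c := iterDesubst (itinPrefix n r) β
  have hLβ : L β = ∑ i, c i * L (parikh (iterBlock (itinPrefix n r) i)) := by
    conv_lhs => rw [eq_sum_iterDesubst_smul_parikh (itinPrefix n r) β]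
    simp only [map_sum, map_smul, smul_eq_mul, c]
  have hsum : ∑ i, c i * (blockLength n r i * L β) = L β := by
    simp only [← mul_assoc, ← Finset.sum_mul, blockLength, c]
    rw [← sum_eq_sum_iterDesubst_mul_length, h.1, one_mul]
  by_contra! hlt
  refine (hsum.trans hLβ).not_gt (Finset.sum_lt_sum (fun i _ => ?_) ⟨2, Finset.mem_univ _, ?_⟩)
  · exact mul_le_mul_of_nonneg_left (hlt i).le (h.2 r i)
  · exact mul_lt_mul_of_pos_left (hlt 2) (iterDesubst_two_pos h r)

lemma exposedPoints_itinerarySet_subset_DFMZ (hn : NonzeroAtBothParities n)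
    (hJ : ∀ r, HasPrefix J (iterBlock (itinPrefix n r) 2)) :
    (itinerarySet n).exposedPoints ℝ ⊆ DFMZ (orbitClosure J) := by
  rintro p ⟨hp, L, hL⟩
  choose i hi using exists_blockLength_mul_le_apply_parikh hp L.toLinearMap
  choose k hk using fun r => exists_hasPrefix_iterBlock hn hJ r (i r)
  have hlength : Tendsto (fun r => blockLength n r (i r)) atTop atTop :=
    tendsto_atTop.2 fun b => by
      filter_upwards [eventually_all.2 fun i => (tendsto_blockLength hn i).eventually_ge_atTop b]
        with r hr using hr (i r)
  obtain ⟨v, hv, φ, hφ, hlim⟩ := exists_subseq_tendsto_of_mem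
    (fun r => shift_iterate_mem_orbitClosure_self J (k r)) hlength
  have hle : L p ≤ L v := le_apply_of_forall_le_apply_birk (C := 0)
    (hlength.comp hφ.tendsto_atTop) L.toLinearMap hlim fun r => by
      have hblock := hi (φ r)
      rw [← (hk (φ r)).birk_eq] at hblock
      rw [sub_zero]
      exact hblock
  exact (hL v (DFMZ_orbitClosure_subset_itinerarySet hn hJ hv)).2 hle ▸ hv

lemma exists_abs_sub_le_of_abs_succ_sub_le {g : ℕ → ℝ} {B c : ℝ}
    (hg : ∀ k, |g (k + 1) - g k| ≤ B) {a b : ℕ} (ha : g a ≤ c) (hb : c ≤ g b) :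
    ∃ k, |g k - c| ≤ B := by
  by_contra! hfar
  have hstep (k : ℕ) : g (k + 1) ≤ c ↔ g k ≤ c := by
    have hk := abs_le.1 (hg k)
    have hfar_k := lt_abs.1 (hfar k)
    have hfar_succ := lt_abs.1 (hfar (k + 1))
    grind
  have hside (k : ℕ) : g k ≤ c ↔ g 0 ≤ c := by
    induction k with
    | zero => rfl
    | succ k ih => rw [hstep, ih]
  have hgb : g b = c := le_antisymm ((hside b).2 ((hside a).1 ha)) hb
  exact ((abs_nonneg _).trans (hg b)).not_gt (by simpa [hgb] using hfar b)

lemma abs_apply_birk_shift_sub_le (L : (Fin 3 → ℝ) →L[ℝ] ℝ) (s : Seq3) (N : ℕ) :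
    |L (birk (shift s) N) - L (birk s N)| ≤ ‖L‖ * 2 := by
  rw [← map_sub, birk_eq_birkhoffSum, birk_eq_birkhoffSum, birkhoffSum_apply_sub_birkhoffSum]
  refine (L.le_opNorm _).trans (mul_le_mul_of_nonneg_left ?_ (norm_nonneg L))
  have hκ (t : Seq3) : ‖kappa t‖ ≤ 1 := by simpa [birk_eq_birkhoffSum] using norm_birk_le t 1
  linarith [norm_sub_le (kappa (shift^[N] s)) (kappa s), hκ s, hκ (shift^[N] s)]

lemma exists_abs_apply_birk_sub_le (L : (Fin 3 → ℝ) →L[ℝ] ℝ) {a b c : ℝ} (hc : c ∈ Set.Icc a b)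
    {s t : Seq3} (hs : s ∈ orbitClosure J) (ht : t ∈ orbitClosure J)
    (ha : ∀ N : ℕ, L (birk s N) ≤ N * a) (hb : ∀ N : ℕ, N * b ≤ L (birk t N)) (N : ℕ) :
    ∃ k, |L (birk (shift^[k] J) N) - N * c| ≤ ‖L‖ * 2 := by
  obtain ⟨i, hi⟩ := exists_initialWord_eq_of_mem_orbitClosure hs N
  obtain ⟨j, hj⟩ := exists_initialWord_eq_of_mem_orbitClosure ht N
  refine exists_abs_sub_le_of_abs_succ_sub_le (a := i) (b := j) (fun k => ?_) ?_ ?_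
  · rw [Function.iterate_succ_apply']
    exact abs_apply_birk_shift_sub_le L _ N
  · rw [birk_eq_parikh, hi, ← birk_eq_parikh]
    exact (ha N).trans (mul_le_mul_of_nonneg_left hc.1 N.cast_nonneg)
  · rw [birk_eq_parikh, hj, ← birk_eq_parikh]
    exact (mul_le_mul_of_nonneg_left hc.2 N.cast_nonneg).trans (hb N)

lemma exists_mem_DFMZ_apply_eq (L : (Fin 3 → ℝ) →L[ℝ] ℝ) (hp : p ∈ DFMZ (orbitClosure J))
    (hq : q ∈ DFMZ (orbitClosure J)) {c : ℝ} (hc : c ∈ Set.uIcc (L p) (L q)) :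
    ∃ v ∈ DFMZ (orbitClosure J), L v = c := by
  wlog hle : L p ≤ L q generalizing p q
  · exact this hq hp (Set.uIcc_comm (L p) _ ▸ hc) (le_of_not_ge hle)
  rw [Set.uIcc_of_le hle] at hc
  have hmax {v : Fin 3 → ℝ} (hv : v ∈ DFMZ (orbitClosure J)) :=
    exists_forall_le_apply_birk (isCompact_orbitClosure J) (mapsTo_shift_orbitClosure J) hv
  obtain ⟨s, hs, hps⟩ : ∃ s ∈ orbitClosure J, ∀ N : ℕ, L (birk s N) ≤ N * L p := by
    simpa using hmax hp (-L.toLinearMap)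
  obtain ⟨t, ht, hqt⟩ := hmax hq L.toLinearMap
  choose k hk using exists_abs_apply_birk_sub_le L hc hs ht hps hqt
  obtain ⟨v, hv, φ, hφ, hlim⟩ := exists_subseq_tendsto_of_mem
    (fun N => shift_iterate_mem_orbitClosure_self J (k N)) tendsto_id
  have hlower : c ≤ L v := le_apply_of_forall_le_apply_birk (C := ‖L‖ * 2) hφ.tendsto_atTop
    L.toLinearMap hlim fun i => by
      have hki := (abs_le.1 (hk (φ i))).1
      simpa using (by linarith : φ i * c - ‖L‖ * 2 ≤ L (birk (shift^[k (φ i)] J) (φ i)))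
  have hupper : -c ≤ (-L.toLinearMap) v :=
    le_apply_of_forall_le_apply_birk (C := ‖L‖ * 2) hφ.tendsto_atTop _ hlim fun i => by
      have hki := (abs_le.1 (hk (φ i))).2
      simpa using (by linarith : φ i * -c - ‖L‖ * 2 ≤ -L (birk (shift^[k (φ i)] J) (φ i)))
  exact ⟨v, hv, le_antisymm (neg_le_neg_iff.1 hupper) hlower⟩

lemma DFMZ_orbitClosure_eq_itinerarySet (hn : NonzeroAtBothParities n)
    (hJ : ∀ r, HasPrefix J (iterBlock (itinPrefix n r) 2)) (hpq : p ≠ q)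
    (hseg : itinerarySet n = segment ℝ p q) : DFMZ (orbitClosure J) = itinerarySet n := by
  have hsub := DFMZ_orbitClosure_subset_itinerarySet hn hJ
  have hexp := exposedPoints_itinerarySet_subset_DFMZ hn hJ
  rw [hseg] at hsub hexp ⊢
  refine hsub.antisymm fun β hβ => ?_
  obtain ⟨L, hL⟩ := SeparatingDual.exists_separating_of_ne (R := ℝ) hpq
  have hLβ : L β ∈ Set.uIcc (L p) (L q) := by
    rw [← segment_eq_uIcc]
    exact image_segment ℝ L.toLinearMap.toAffineMap p q ▸ Set.mem_image_of_mem L hβ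
  obtain ⟨v, hv, hvβ⟩ := exists_mem_DFMZ_apply_eq L (hexp (left_mem_exposedPoints_segment hpq))
    (hexp (right_mem_exposedPoints_segment hpq)) hLβ
  exact injOn_segment_of_ne L.toLinearMap hL (hsub hv) hβ hvβ ▸ hv

end FrequencySegment

section InvariantMeasures

/-- `μ` is a probability measure carried by `X` and invariant under `T`, i.e. an invariant measure
of the restriction of `T` to `X` when `X` is measurable and `T`-invariant. -/
structure IsInvariantOn {Y : Type*} [MeasurableSpace Y] (T : Y → Y) (X : Set Y) (μ : Measure Y) :
    Prop where
  isProbabilityMeasure : IsProbabilityMeasure μ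
  measurePreserving : MeasurePreserving T μ μ
  measure_eq_one : μ X = 1

variable {Y E : Type*} [MeasurableSpace Y] {T : Y → Y} {X : Set Y} {μ : Measure Y}

lemma IsInvariantOn.ae_mem (h : IsInvariantOn T X μ) (hX : MeasurableSet X) : ∀ᵐ y ∂μ, y ∈ X :=
  have := h.isProbabilityMeasure
  (mem_ae_iff_prob_eq_one hX).2 h.measure_eq_one

lemma integrable_comp_iterate [NormedAddCommGroup E] {f : Y → E} (hT : MeasurePreserving T μ μ)
    (hf : Integrable f μ) (k : ℕ) : Integrable (fun y => f (T^[k] y)) μ :=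
  (hT.iterate k).integrable_comp_of_integrable hf

lemma integral_birkhoffSum [NormedAddCommGroup E] [NormedSpace ℝ E] {f : Y → E}
    (hT : MeasurePreserving T μ μ) (hf : Integrable f μ) (N : ℕ) :
    ∫ y, birkhoffSum T f N y ∂μ = N • ∫ y, f y ∂μ := by
  have hiterate (k : ℕ) : ∫ y, f (T^[k] y) ∂μ = ∫ y, f y ∂μ := by
    have hk := hT.iterate k
    conv_rhs => rw [← hk.map_eq]
    exact (integral_map hk.measurable.aemeasurable
      (hk.map_eq.symm ▸ hf.aestronglyMeasurable)).symm
  simp only [birkhoffSum]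
  rw [integral_finsetSum _ fun k _ => integrable_comp_iterate hT hf k]
  simp only [hiterate, Finset.sum_const, Finset.card_range]

lemma le_integral_of_le_birkhoffSum (h : IsInvariantOn T X μ) (hX : MeasurableSet X) {f : Y → ℝ}
    (hf : Integrable f μ) {a C : ℝ} (hle : ∀ y ∈ X, ∀ N : ℕ, N * a - C ≤ birkhoffSum T f N y) :
    a ≤ ∫ y, f y ∂μ := by
  have := h.isProbabilityMeasure
  have hbound (N : ℕ) : N * (a - ∫ y, f y ∂μ) ≤ C := by
    have hmono : ∫ _, (N * a - C) ∂μ ≤ ∫ y, birkhoffSum T f N y ∂μ :=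
      integral_mono_ae (integrable_const _)
        (integrable_finsetSum _ fun k _ => integrable_comp_iterate h.measurePreserving hf k)
        ((h.ae_mem hX).mono fun y hy => hle y hy N)
    rw [integral_birkhoffSum h.measurePreserving hf] at hmono
    simp only [integral_const, probReal_univ, one_smul, nsmul_eq_mul] at hmono
    linarith
  by_contra! hlt
  obtain ⟨N, hN⟩ := exists_nat_gt (C / (a - ∫ y, f y ∂μ))
  exact (hbound N).not_gt ((div_lt_iff₀ (sub_pos.2 hlt)).1 hN)

lemma abs_integral_le_of_abs_birkhoffSum_le (h : IsInvariantOn T X μ) (hX : MeasurableSet X)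
    {f : Y → ℝ} (hf : Integrable f μ) {ε C : ℝ}
    (hle : ∀ y ∈ X, ∀ N : ℕ, |birkhoffSum T f N y| ≤ C + N * ε) : |∫ y, f y ∂μ| ≤ ε := by
  have hlower : -ε ≤ ∫ y, f y ∂μ := le_integral_of_le_birkhoffSum h hX (C := C) hf
    fun y hy N => by linarith [(abs_le.1 (hle y hy N)).1]
  have hupper : -ε ≤ ∫ y, (-f) y ∂μ := le_integral_of_le_birkhoffSum h hX (C := C) hf.neg
    fun y hy N => by
      rw [birkhoffSum_neg]
      linarith [(abs_le.1 (hle y hy N)).2]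
  rw [integral_neg'] at hupper
  exact abs_le.2 ⟨hlower, neg_le_neg_iff.1 hupper⟩

lemma integrable_kappa (μ : Measure Seq3) [IsFiniteMeasure μ] : Integrable kappa μ :=
  continuous_kappa.integrable_of_hasCompactSupport (.of_compactSpace kappa)

lemma apply_integral_kappa {μ : Measure Seq3} [IsFiniteMeasure μ] (L : (Fin 3 → ℝ) →ₗ[ℝ] ℝ) :
    L (∫ s, kappa s ∂μ) = ∫ s, (L ∘ kappa) s ∂μ :=
  (L.toContinuousLinearMap.integral_comp_comm (integrable_kappa μ)).symm

variable {n : ℕ → ℕ} {J : Seq3}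

lemma integral_kappa_mem_itinerarySet (hn : NonzeroAtBothParities n)
    (hJ : ∀ r, HasPrefix J (iterBlock (itinPrefix n r) 2)) {μ : Measure Seq3}
    (hμ : IsInvariantOn shift (orbitClosure J) μ) : ∫ s, kappa s ∂μ ∈ itinerarySet n := by
  have := hμ.isProbabilityMeasure
  constructor
  · have hsum := apply_integral_kappa (μ := μ) (∑ i, LinearMap.proj i)
    have hκ (s : Seq3) : ∑ i, kappa s i = 1 := by simp [kappa_eq_single]
    simpa [hκ] using hsum
  · intro r i
    obtain ⟨C, hC⟩ := exists_neg_le_iterDesubst_birk hn hJ r i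
    rw [← iterDesubstCoord_apply, apply_integral_kappa]
    set L := iterDesubstCoord (itinPrefix n r) i
    have hint : Integrable (L ∘ kappa) μ :=
      L.toContinuousLinearMap.integrable_comp (integrable_kappa μ)
    refine le_integral_of_le_birkhoffSum hμ (isClosed_orbitClosure J).measurableSet (C := C) hint
      fun s hs N => ?_
    have hbirk : -C ≤ L (birk s N) := hC s hs N
    rw [apply_birk_eq_birkhoffSum] at hbirk
    simpa using hbirk

end InvariantMeasures

section LocalFunctions

lemma abs_birkhoffSum_le {Y : Type*} {T : Y → Y} {f : Y → ℝ} {B : ℝ} (hB : ∀ y, |f y| ≤ B)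
    (N : ℕ) (y : Y) : |birkhoffSum T f N y| ≤ N * B := by
  simpa [birkhoffSum] using (Finset.abs_sum_le_sum_abs _ _).trans
    (Finset.sum_le_card_nsmul (Finset.range N) _ B fun k _ => hB (T^[k] y))

variable {f : Seq3 → ℝ} {m : ℕ} {B : ℝ}

lemma continuous_of_dependsOn_Iio (hf : DependsOn f (Set.Iio m)) : Continuous f :=
  continuous_iff_continuousAt.2 fun s => tendsto_const_nhds.congr' <| by
    filter_upwards [eventually_initialWord_eq s m] with t ht
    exact hf fun i hi => by
      rw [← getElem_initialWord s (by simpa using hi), ← getElem_initialWord t (by simpa using hi)]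
      exact (List.getElem_of_eq ht _).symm

lemma abs_birkhoffSum_sub_le (hf : DependsOn f (Set.Iio m)) (hB : ∀ s, |f s| ≤ B) {s t : Seq3}
    {N : ℕ} (hst : ∀ i < N, s i = t i) :
    |birkhoffSum shift f N s - birkhoffSum shift f N t| ≤ 2 * m * B := by
  have htail (K : ℕ) (hK : K ≤ m) (u v : Seq3) :
      |birkhoffSum shift f K u - birkhoffSum shift f K v| ≤ 2 * m * B := by
    have hB0 : 0 ≤ B := (abs_nonneg _).trans (hB u)
    have hKm : (K : ℝ) * B ≤ m * B := by gcongr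
    linarith [abs_sub (birkhoffSum shift f K u) (birkhoffSum shift f K v),
      abs_birkhoffSum_le (T := shift) hB K u, abs_birkhoffSum_le (T := shift) hB K v]
  rcases le_total N m with hN | hN
  · exact htail N hN s t
  obtain ⟨K, rfl⟩ := Nat.exists_eq_add_of_le' hN
  have hinit : birkhoffSum shift f K s = birkhoffSum shift f K t :=
    Finset.sum_congr rfl fun k hk => hf fun i hi => by
      rw [shift_iterate_apply, shift_iterate_apply]
      exact hst _ (add_lt_add (Finset.mem_range.1 hk) hi)
  rw [birkhoffSum_add, birkhoffSum_add, hinit, add_sub_add_left_eq_sub]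
  exact htail m le_rfl _ _

/-- The linear functional sending the Parikh vector of each block of `ns` to the Birkhoff sum of `f`
along that block, read as an initial word of a sequence ending in zeros. -/
noncomputable def blockFunctional (f : Seq3 → ℝ) (ns : List ℕ) : (Fin 3 → ℝ) →ₗ[ℝ] ℝ :=
  ∑ i, birkhoffSum shift f (iterBlock ns i).length (zeroExtend (iterBlock ns i)) •
    iterDesubstCoord ns i

lemma blockFunctional_parikh_iterBlock (f : Seq3 → ℝ) (ns : List ℕ) (i : Fin 3) :
    blockFunctional f ns (parikh (iterBlock ns i)) =
      birkhoffSum shift f (iterBlock ns i).length (zeroExtend (iterBlock ns i)) := by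
  simp [blockFunctional, iterDesubst_parikh_iterBlock, Pi.single_apply]

lemma abs_birkhoffSum_sub_blockFunctional_le (hf : DependsOn f (Set.Iio m)) (hB : ∀ s, |f s| ≤ B)
    {ns : List ℕ} {z : List (Fin 3)} {s : Seq3} (hs : HasPrefix s (iterSubst ns z)) :
    |birkhoffSum shift f (iterSubst ns z).length s -
      blockFunctional f ns (parikh (iterSubst ns z))| ≤ z.length * (2 * m * B) := by
  induction z generalizing s with
  | nil => simp [iterSubst_nil, parikh_nil]
  | cons a z ih =>
    rw [iterSubst_cons_word, hasPrefix_append] at hs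
    have hblock := abs_birkhoffSum_sub_le hf hB
      fun i hi => (hs.1.apply_eq hi).trans ((hasPrefix_zeroExtend _).apply_eq hi).symm
    rw [iterSubst_cons_word, List.length_append, birkhoffSum_add, parikh_append, map_add,
      blockFunctional_parikh_iterBlock, add_sub_add_comm, List.length_cons, Nat.cast_succ,
      add_one_mul, add_comm (_ * _)]
    exact (abs_add_le _ _).trans (add_le_add hblock (ih hs.2))

lemma length_mul_le_length_iterSubst {ns : List ℕ} {k : ℕ} (hk : ∀ i, k ≤ (iterBlock ns i).length)
    (z : List (Fin 3)) : z.length * k ≤ (iterSubst ns z).length := by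
  rw [iterSubst_eq_flatMap, List.length_flatMap, ← smul_eq_mul]
  simpa using List.card_nsmul_le_sum (z.map fun i => (iterBlock ns i).length) k
    (by simpa using fun i _ => hk i)

lemma abs_birkhoffSum_sub_apply_parikh_le (hB : ∀ s, |f s| ≤ B) (L : (Fin 3 → ℝ) →L[ℝ] ℝ)
    {l : List (Fin 3)} {K : ℕ} (hl : l.length ≤ K) (s : Seq3) :
    |birkhoffSum shift f l.length s - L (parikh l)| ≤ K * (B + ‖L‖) := by
  have hB0 : 0 ≤ B := (abs_nonneg _).trans (hB s)
  calc |birkhoffSum shift f l.length s - L (parikh l)|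
      ≤ l.length * B + ‖L‖ * l.length := (abs_sub _ _).trans <| add_le_add
        (abs_birkhoffSum_le hB _ s)
        ((L.le_opNorm _).trans (mul_le_mul_of_nonneg_left (norm_parikh_le l) (norm_nonneg L)))
    _ = l.length * (B + ‖L‖) := by ring
    _ ≤ K * (B + ‖L‖) := by gcongr

lemma abs_birkhoffSum_sub_blockFunctional_append_le (hf : DependsOn f (Set.Iio m))
    (hB : ∀ s, |f s| ≤ B) {ns : List ℕ} {p z q : List (Fin 3)} {K : ℕ} {s : Seq3}
    (hs : HasPrefix s (p ++ (iterSubst ns z ++ q))) (hp : p.length ≤ K) (hq : q.length ≤ K) :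
    |birkhoffSum shift f (p ++ (iterSubst ns z ++ q)).length s -
        blockFunctional f ns (parikh (p ++ (iterSubst ns z ++ q)))| ≤
      2 * (K * (B + ‖(blockFunctional f ns).toContinuousLinearMap‖)) +
        z.length * (2 * m * B) := by
  have hend {l : List (Fin 3)} (hl : l.length ≤ K) (t : Seq3) :=
    abs_birkhoffSum_sub_apply_parikh_le hB (blockFunctional f ns).toContinuousLinearMap hl t
  rw [hasPrefix_append, hasPrefix_append] at hs
  rw [List.length_append, List.length_append, birkhoffSum_add, birkhoffSum_add, parikh_append,
    parikh_append, map_add, map_add, add_sub_add_comm, add_sub_add_comm]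
  refine (abs_add_le _ _).trans ((add_le_add (hend hp _) ((abs_add_le _ _).trans
    (add_le_add (abs_birkhoffSum_sub_blockFunctional_le hf hB hs.2.1) (hend hq _)))).trans_eq ?_)
  ring

variable {n : ℕ → ℕ} {J : Seq3} {ε : ℝ}

lemma exists_abs_birkhoffSum_sub_apply_birk_le (hn : NonzeroAtBothParities n)
    (hJ : ∀ r, HasPrefix J (iterBlock (itinPrefix n r) 2)) (hf : DependsOn f (Set.Iio m))
    (hB : ∀ s, |f s| ≤ B) (hε : 0 < ε) :
    ∃ (L : (Fin 3 → ℝ) →ₗ[ℝ] ℝ) (C : ℝ), ∀ s ∈ orbitClosure J, ∀ N : ℕ,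
      |birkhoffSum shift f N s - L (birk s N)| ≤ C + N * ε := by
  obtain ⟨k, hk⟩ := exists_nat_ge (2 * m * B / ε)
  rw [div_le_iff₀ hε] at hk
  obtain ⟨r, hr⟩ := (eventually_all.2 fun i =>
    (tendsto_blockLength hn i).eventually_ge_atTop k).exists
  set L := blockFunctional f (itinPrefix n r)
  refine ⟨L, 2 * ((∑ i, blockLength n r i : ℕ) * (B + ‖L.toContinuousLinearMap‖)),
    fun s hs N => ?_⟩
  obtain ⟨p, z, q, hw, hp, hq⟩ := initialWord_eq_append_iterSubst_append hn hJ hs r N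
  have hlength : p.length + ((iterSubst (itinPrefix n r) z).length + q.length) = N := by
    simpa using (congrArg List.length hw).symm
  have hz : z.length * (2 * m * B) ≤ N * ε := by
    have hzN : (z.length * k : ℝ) ≤ N := by
      exact_mod_cast (length_mul_le_length_iterSubst hr z).trans (by omega)
    calc z.length * (2 * m * B) ≤ z.length * (k * ε) := by gcongr
      _ = z.length * k * ε := by ring
      _ ≤ N * ε := by gcongr
  have happend := abs_birkhoffSum_sub_blockFunctional_append_le hf hB
    (hw ▸ hasPrefix_initialWord s N) hp hq
  rw [← hw, length_initialWord, ← birk_eq_parikh] at happend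
  exact happend.trans (add_le_add_right hz _)

lemma exists_abs_integral_sub_apply_integral_kappa_le (hn : NonzeroAtBothParities n)
    (hJ : ∀ r, HasPrefix J (iterBlock (itinPrefix n r) 2)) (hf : DependsOn f (Set.Iio m))
    (hB : ∀ s, |f s| ≤ B) (hε : 0 < ε) :
    ∃ L : (Fin 3 → ℝ) →ₗ[ℝ] ℝ, ∀ μ, IsInvariantOn shift (orbitClosure J) μ →
      |∫ s, f s ∂μ - L (∫ s, kappa s ∂μ)| ≤ ε := by
  obtain ⟨L, C, hL⟩ := exists_abs_birkhoffSum_sub_apply_birk_le hn hJ hf hB hε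
  refine ⟨L, fun μ hμ => ?_⟩
  have := hμ.isProbabilityMeasure
  have hfint : Integrable f μ :=
    (continuous_of_dependsOn_Iio hf).integrable_of_hasCompactSupport (.of_compactSpace f)
  have hLint : Integrable (L ∘ kappa) μ :=
    L.toContinuousLinearMap.integrable_comp (integrable_kappa μ)
  rw [apply_integral_kappa, ← integral_sub hfint hLint]
  refine abs_integral_le_of_abs_birkhoffSum_le hμ (isClosed_orbitClosure J).measurableSet (C := C)
    (hfint.sub hLint) fun s hs N => ?_
  rw [birkhoffSum_sub, ← apply_birk_eq_birkhoffSum]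
  exact hL s hs N

lemma integral_eq_of_integral_kappa_eq (hn : NonzeroAtBothParities n)
    (hJ : ∀ r, HasPrefix J (iterBlock (itinPrefix n r) 2)) (hf : DependsOn f (Set.Iio m))
    (hB : ∀ s, |f s| ≤ B) {μ ν : Measure Seq3} (hμ : IsInvariantOn shift (orbitClosure J) μ)
    (hν : IsInvariantOn shift (orbitClosure J) ν) (h : ∫ s, kappa s ∂μ = ∫ s, kappa s ∂ν) :
    ∫ s, f s ∂μ = ∫ s, f s ∂ν := by
  refine eq_of_forall_dist_le fun ε hε => ?_
  obtain ⟨L, hL⟩ := exists_abs_integral_sub_apply_integral_kappa_le hn hJ hf hB (half_pos hε)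
  have hνL := hL ν hν
  rw [← h, abs_sub_comm] at hνL
  exact (abs_sub_le _ _ _).trans ((add_le_add (hL μ hμ) hνL).trans_eq (add_halves ε))

lemma injOn_integral_kappa (hn : NonzeroAtBothParities n)
    (hJ : ∀ r, HasPrefix J (iterBlock (itinPrefix n r) 2)) :
    Set.InjOn (fun μ => ∫ s, kappa s ∂μ) {μ | IsInvariantOn shift (orbitClosure J) μ} := by
  intro μ hμ ν hν h
  have := hμ.isProbabilityMeasure
  have := hν.isProbabilityMeasure
  refine ext_of_generate_finite _ generateFrom_measurableCylinders.symm
    isPiSystem_measurableCylinders (fun A hA => ?_) (by simp)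
  have hAmeas : MeasurableSet A := .of_mem_measurableCylinders hA
  obtain ⟨I, S, -, rfl⟩ := (mem_measurableCylinders A).1 hA
  have hI : (I : Set ℕ) ⊆ Set.Iio (I.sup id + 1) := fun i hi =>
    Nat.lt_succ_of_le (Finset.le_sup (f := id) hi)
  have hcyl := integral_eq_of_integral_kappa_eq hn hJ (B := 1)
    ((dependsOn_cylinder_indicator_const S (1 : ℝ)).mono hI)
    (fun s => by by_cases hs : s ∈ cylinder I S <;> simp [hs]) hμ hν h
  rw [integral_indicator_const _ hAmeas, integral_indicator_const _ hAmeas] at hcyl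
  exact (measureReal_eq_measureReal_iff).1 (by simpa using hcyl)

end LocalFunctions

section EmpiricalMeasures

variable {Y : Type*} [MeasurableSpace Y] {T : Y → Y} {X : Set Y} {f : Y → ℝ} {y : Y}

/-- The uniform measure on the orbit segment `y, T y, …, T^[N] y`; it has `N + 1` atoms, so that it
is a probability measure for every `N`. -/
noncomputable def empiricalMeasure (T : Y → Y) (y : Y) (N : ℕ) : Measure Y :=
  (↑(N + 1) : ENNReal)⁻¹ • ∑ k ∈ Finset.range (N + 1), Measure.dirac (T^[k] y)

lemma empiricalMeasure_eq_one (hX : ∀ k, T^[k] y ∈ X) (N : ℕ) : empiricalMeasure T y N X = 1 := by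
  simp only [empiricalMeasure, Measure.smul_apply, Measure.finsetSum_apply,
    Measure.dirac_apply_of_mem (hX _), Finset.sum_const, Finset.card_range, nsmul_one, smul_eq_mul]
  exact ENNReal.inv_mul_cancel (by simp) (ENNReal.natCast_ne_top _)

instance isProbabilityMeasure_empiricalMeasure (T : Y → Y) (y : Y) (N : ℕ) :
    IsProbabilityMeasure (empiricalMeasure T y N) :=
  ⟨empiricalMeasure_eq_one (fun _ => Set.mem_univ _) N⟩

variable [TopologicalSpace Y] [BorelSpace Y]

lemma integral_empiricalMeasure [CompactSpace Y] (hf : Continuous f) (T : Y → Y) (y : Y) (N : ℕ) :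
    ∫ x, f x ∂empiricalMeasure T y N = birkhoffAverage ℝ T f (N + 1) y := by
  rw [empiricalMeasure, integral_smul_measure, integral_finsetSum_measure fun k _ =>
    hf.integrable_of_hasCompactSupport (.of_compactSpace f)]
  simp only [integral_dirac' f _ hf.stronglyMeasurable, ENNReal.toReal_inv, ENNReal.toReal_natCast,
    birkhoffAverage, birkhoffSum]

variable [HasOuterApproxClosed Y]

lemma measurePreserving_of_tendsto_birkhoffAverage (hT : Continuous T)
    {μ : Measure Y} [IsProbabilityMeasure μ] {l : Filter ℕ} [l.NeBot] (hl : l ≤ atTop)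
    (hμ : ∀ f : Y → ℝ, Continuous f →
      Tendsto (fun N => birkhoffAverage ℝ T f N y) l (𝓝 (∫ x, f x ∂μ))) :
    MeasurePreserving T μ μ := by
  have := Measure.isProbabilityMeasure_map (μ := μ) hT.aemeasurable
  refine ⟨hT.measurable, ext_of_forall_integral_eq_of_IsFiniteMeasure fun f => ?_⟩
  rw [integral_map hT.aemeasurable f.continuous.aestronglyMeasurable]
  have hshift (N : ℕ) :
      birkhoffAverage ℝ T (f ∘ T) N y = birkhoffAverage ℝ T f N (T y) := by
    simp [birkhoffAverage, birkhoffSum, ← Function.iterate_succ_apply, Function.iterate_succ_apply']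
  have hdiff := (hμ _ (f.continuous.comp hT)).sub (hμ f f.continuous)
  simp only [hshift] at hdiff
  exact sub_eq_zero.1 (tendsto_nhds_unique hdiff
    ((tendsto_birkhoffAverage_apply_sub_birkhoffAverage' ℝ f.isBounded_range T y).mono_left hl))

lemma exists_isInvariantOn_forall_integral_eq [CompactSpace Y] [T2Space Y] (hT : Continuous T)
    (hX : IsClosed X) (hTX : Set.MapsTo T X X) (hy : y ∈ X) :
    ∃ μ, IsInvariantOn T X μ ∧ ∀ f : Y → ℝ, Continuous f → ∀ a,
      Tendsto (fun N => birkhoffAverage ℝ T f N y) atTop (𝓝 a) → ∫ x, f x ∂μ = a := by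
  let U := Ultrafilter.of (atTop : Filter ℕ)
  let P (N : ℕ) : ProbabilityMeasure Y := ⟨empiricalMeasure T y N, inferInstance⟩
  obtain ⟨μ, hμ⟩ : ∃ μ, Tendsto P U (𝓝 μ) := ⟨_, Ultrafilter.le_nhds_lim (U.map P)⟩
  have hl : Filter.map (· + 1) (U : Filter ℕ) ≤ atTop :=
    (tendsto_add_atTop_nat 1).mono_left (Ultrafilter.of_le atTop)
  have hlim (f : Y → ℝ) (hf : Continuous f) :
      Tendsto (fun N => birkhoffAverage ℝ T f N y) (Filter.map (· + 1) (U : Filter ℕ))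
        (𝓝 (∫ x, f x ∂(μ : Measure Y))) := by
    rw [tendsto_map'_iff]
    refine (ProbabilityMeasure.tendsto_iff_forall_integral_tendsto.1 hμ
      (BoundedContinuousFunction.mkOfCompact ⟨f, hf⟩)).congr fun N => ?_
    exact integral_empiricalMeasure hf T y N
  have hμX : (1 : ENNReal) ≤ (μ : Measure Y) X := by
    simpa [P, empiricalMeasure_eq_one fun k => hTX.iterate k hy] using
      ProbabilityMeasure.limsup_measure_closed_le_of_tendsto hμ hX
  exact ⟨μ, ⟨inferInstance, measurePreserving_of_tendsto_birkhoffAverage hT hl hlim,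
    le_antisymm prob_le_one hμX⟩,
    fun f hf a ha => tendsto_nhds_unique (hlim f hf) (ha.mono_left hl)⟩

lemma exists_isInvariantOn_integral_kappa_eq {X : Set Seq3} (hX : IsClosed X)
    (hσ : Set.MapsTo shift X X) {s : Seq3} (hs : s ∈ X) {v : Fin 3 → ℝ} (hv : hasFreq s v) :
    ∃ μ, IsInvariantOn shift X μ ∧ ∫ x, kappa x ∂μ = v := by
  obtain ⟨μ, hμ, hint⟩ := exists_isInvariantOn_forall_integral_eq continuous_shift hX hσ hs
  have := hμ.isProbabilityMeasure
  refine ⟨μ, hμ, funext fun i => ?_⟩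
  set L : (Fin 3 → ℝ) →ₗ[ℝ] ℝ := LinearMap.proj i
  change L (∫ x, kappa x ∂μ) = L v
  rw [apply_integral_kappa]
  refine hint _ (L.continuous_of_finiteDimensional.comp continuous_kappa) _ ?_
  simpa only [birkhoffAverage, smul_eq_mul, ← apply_birk_eq_birkhoffSum] using
    tendsto_inv_mul_apply_birk L hv

end EmpiricalMeasures

section ErgodicMeasures

variable {Y E : Type*} [MeasurableSpace Y] [NormedAddCommGroup E] [NormedSpace ℝ E] {T : Y → Y}
  {X : Set Y} {f : Y → E} {μ ν : Measure Y} {a b : ENNReal}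

lemma isInvariantOn_smul_add_smul (hμ : IsInvariantOn T X μ) (hν : IsInvariantOn T X ν)
    (hab : a + b = 1) : IsInvariantOn T X (a • μ + b • ν) where
  isProbabilityMeasure :=
    have := hμ.isProbabilityMeasure
    have := hν.isProbabilityMeasure
    ⟨by simp [hab]⟩
  measurePreserving :=
    have hT := hμ.measurePreserving.measurable
    ⟨hT, by rw [Measure.map_add _ _ hT, Measure.map_smul, Measure.map_smul,
      hμ.measurePreserving.map_eq, hν.measurePreserving.map_eq]⟩
  measure_eq_one := by simp [hμ.measure_eq_one, hν.measure_eq_one, hab]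

lemma integral_smul_add_smul (hμ : Integrable f μ) (hν : Integrable f ν) (ha : a ≠ ⊤)
    (hb : b ≠ ⊤) : ∫ y, f y ∂(a • μ + b • ν) =
      a.toReal • ∫ y, f y ∂μ + b.toReal • ∫ y, f y ∂ν := by
  rw [integral_add_measure (hμ.smul_measure ha) (hν.smul_measure hb), integral_smul_measure,
    integral_smul_measure]

lemma isInvariantOn_of_smul_add_smul [IsProbabilityMeasure μ] (hX : MeasurableSet X)
    (hT : MeasurePreserving T μ μ) (ha : a ≠ 0)
    (h : IsInvariantOn T X (a • μ + b • ν)) : IsInvariantOn T X μ := by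
  have hcompl := h.ae_mem hX
  rw [ae_add_measure_iff, Measure.ae_ennreal_smul_measure_iff ha] at hcompl
  exact ⟨inferInstance, hT, (mem_ae_iff_prob_eq_one hX).1 hcompl.1⟩

lemma ergodic_iff_integral_mem_extremePoints (hX : MeasurableSet X)
    (hf : ∀ μ, IsInvariantOn T X μ → Integrable f μ)
    (hinj : Set.InjOn (fun μ => ∫ y, f y ∂μ) {μ | IsInvariantOn T X μ})
    (hμ : IsInvariantOn T X μ) :
    Ergodic T μ ↔ ∫ y, f y ∂μ ∈
      ((fun μ => ∫ y, f y ∂μ) '' {μ | IsInvariantOn T X μ}).extremePoints ℝ := by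
  -- Ergodic measures are the extreme points of the invariant probability measures, and `μ ↦ ∫ f ∂μ`
  -- is affine and injective.
  have := hμ.isProbabilityMeasure
  rw [Ergodic.iff_mem_extremePoints, mem_extremePoints_iff_left, mem_extremePoints_iff_left]
  refine ⟨fun h => ⟨⟨μ, hμ, rfl⟩, ?_⟩, fun h => ⟨⟨hμ.measurePreserving, this⟩, ?_⟩⟩
  · rintro _ ⟨ν₁, h₁, rfl⟩ _ ⟨ν₂, h₂, rfl⟩ ⟨a, b, ha, hb, hab, hμab⟩
    have hab' : ENNReal.ofReal a + ENNReal.ofReal b = 1 := by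
      rw [← ENNReal.ofReal_add ha.le hb.le, hab, ENNReal.ofReal_one]
    have hcomb : ENNReal.ofReal a • ν₁ + ENNReal.ofReal b • ν₂ = μ := by
      refine hinj (isInvariantOn_smul_add_smul h₁ h₂ hab') hμ ?_
      dsimp only
      rw [integral_smul_add_smul (hf _ h₁) (hf _ h₂) ENNReal.ofReal_ne_top ENNReal.ofReal_ne_top,
        ENNReal.toReal_ofReal ha.le, ENNReal.toReal_ofReal hb.le, hμab]
    rw [h.2 ν₁ ⟨h₁.measurePreserving, h₁.isProbabilityMeasure⟩ ν₂
      ⟨h₂.measurePreserving, h₂.isProbabilityMeasure⟩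
      ⟨_, _, ENNReal.ofReal_pos.2 ha, ENNReal.ofReal_pos.2 hb, hab', hcomb⟩]
  · rintro ν₁ ⟨hT₁, hp₁⟩ ν₂ ⟨hT₂, hp₂⟩ ⟨a, b, ha, hb, hab, rfl⟩
    have ha' : a ≠ ⊤ := ne_top_of_le_ne_top ENNReal.one_ne_top (hab ▸ le_self_add)
    have hb' : b ≠ ⊤ := ne_top_of_le_ne_top ENNReal.one_ne_top (hab ▸ le_add_self)
    have h₁ := isInvariantOn_of_smul_add_smul hX hT₁ ha.ne' hμ
    have h₂ := isInvariantOn_of_smul_add_smul hX hT₂ hb.ne' (add_comm (a • ν₁) _ ▸ hμ)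
    refine hinj h₁ hμ (h.2 _ ⟨ν₁, h₁, rfl⟩ _ ⟨ν₂, h₂, rfl⟩ ⟨a.toReal, b.toReal,
      ENNReal.toReal_pos ha.ne' ha', ENNReal.toReal_pos hb.ne' hb', ?_,
      (integral_smul_add_smul (hf _ h₁) (hf _ h₂) ha' hb').symm⟩)
    rw [← ENNReal.toReal_add ha' hb', hab, ENNReal.toReal_one]

lemma convex_image_integral (hf : ∀ μ, IsInvariantOn T X μ → Integrable f μ) :
    Convex ℝ ((fun μ => ∫ y, f y ∂μ) '' {μ | IsInvariantOn T X μ}) := by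
  rintro _ ⟨μ, hμ, rfl⟩ _ ⟨ν, hν, rfl⟩ a b ha hb hab
  refine ⟨ENNReal.ofReal a • μ + ENNReal.ofReal b • ν, isInvariantOn_smul_add_smul hμ hν ?_, ?_⟩
  · rw [← ENNReal.ofReal_add ha hb, hab, ENNReal.ofReal_one]
  · dsimp only
    rw [integral_smul_add_smul (hf _ hμ) (hf _ hν) ENNReal.ofReal_ne_top ENNReal.ofReal_ne_top,
      ENNReal.toReal_ofReal ha, ENNReal.toReal_ofReal hb]

end ErgodicMeasures

section ExceptionalSequences

variable {α p q v : Fin 3 → ℝ} {n : ℕ → ℕ} {J : Seq3}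

lemma setOf_isInfimax_eq_itinerarySet (hα : α ∈ itinerarySet n) (hn : NonzeroAtBothParities n)
    (hJ : IsInfimax α J) : {β | β ∈ Delta' ∧ IsInfimax β J} = itinerarySet n := by
  ext β
  refine ⟨fun ⟨hβ, hJβ⟩ => ?_, fun hβ => ⟨mem_Delta'_of_mem_itinerarySet hβ,
    isInfimax_of_mem_itinerarySet hα hJ hn hβ⟩⟩
  obtain ⟨m, hm⟩ := exists_mem_itinerarySet hβ
  exact itinerary_eq_of_isInfimax hm hα hJβ hJ ▸ hm

lemma exists_hasFreq_of_mem_pair (hn : NonzeroAtBothParities n)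
    (hJ : ∀ r, HasPrefix J (iterBlock (itinPrefix n r) 2)) (hpq : p ≠ q)
    (hseg : itinerarySet n = segment ℝ p q) (hv : v = p ∨ v = q) :
    ∃ s ∈ orbitClosure J, hasFreq s v := by
  refine exists_hasFreq_of_mem_exposedPoints (isCompact_orbitClosure J)
    (mapsTo_shift_orbitClosure J) ?_
  rw [DFMZ_orbitClosure_eq_itinerarySet hn hJ hpq hseg, hseg]
  rcases hv with rfl | rfl
  · exact left_mem_exposedPoints_segment hpq
  · exact right_mem_exposedPoints_segment hpq

lemma image_integral_kappa_eq_segment (hn : NonzeroAtBothParities n)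
    (hJ : ∀ r, HasPrefix J (iterBlock (itinPrefix n r) 2)) (hpq : p ≠ q)
    (hseg : itinerarySet n = segment ℝ p q) :
    (fun μ => ∫ s, kappa s ∂μ) '' {μ | IsInvariantOn shift (orbitClosure J) μ} =
      segment ℝ p q := by
  refine Set.Subset.antisymm ?_ (Convex.segment_subset
    (convex_image_integral fun μ hμ => have := hμ.isProbabilityMeasure; integrable_kappa μ) ?_ ?_)
  · rintro _ ⟨μ, hμ, rfl⟩
    exact hseg ▸ integral_kappa_mem_itinerarySet hn hJ hμ
  · obtain ⟨s, hs, hsp⟩ := exists_hasFreq_of_mem_pair hn hJ hpq hseg (.inl rfl)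
    exact exists_isInvariantOn_integral_kappa_eq (isClosed_orbitClosure J)
      (mapsTo_shift_orbitClosure J) hs hsp
  · obtain ⟨s, hs, hsq⟩ := exists_hasFreq_of_mem_pair hn hJ hpq hseg (.inr rfl)
    exact exists_isInvariantOn_integral_kappa_eq (isClosed_orbitClosure J)
      (mapsTo_shift_orbitClosure J) hs hsq

lemma ergodic_iff_integral_kappa_eq_or_eq (hn : NonzeroAtBothParities n)
    (hJ : ∀ r, HasPrefix J (iterBlock (itinPrefix n r) 2)) (hpq : p ≠ q)
    (hseg : itinerarySet n = segment ℝ p q) {μ : Measure Seq3}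
    (hμ : IsInvariantOn shift (orbitClosure J) μ) :
    Ergodic shift μ ↔ ∫ s, kappa s ∂μ = p ∨ ∫ s, kappa s ∂μ = q := by
  rw [ergodic_iff_integral_mem_extremePoints (isClosed_orbitClosure J).measurableSet
    (fun ν hν => have := hν.isProbabilityMeasure; integrable_kappa ν)
    (injOn_integral_kappa hn hJ) hμ, image_integral_kappa_eq_segment hn hJ hpq hseg,
    extremePoints_segment hpq, Set.mem_insert_iff, Set.mem_singleton_iff]

end ExceptionalSequences

end Infimax

/-- If `α ∈ Δ'` is irrational and exceptional, then `σ` restricted to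
`C_α` has exactly two ergodic invariant Borel probability measures `μ₁ ≠ μ₂`, with
distinct rotation vectors; `DF_MZ(C_α)` is the segment joining the two rotation vectors,
which is the exceptional interval `P_α = {α' ∈ Δ' : I(α') = I(α)}`; and `C_α` contains
points whose digit frequency differs from each rotation vector (so `μ₁, μ₂` are lost). -/
theorem stmt18 (α : Fin 3 → ℝ) (hα : α ∈ Delta') (hirr : ¬ IsRat α)
    (Iα : Seq3) (hI : IsInfimax α Iα)
    (hexc : ∃ α' ∈ Delta', α' ≠ α ∧ IsInfimax α' Iα) :
    ∃ μ₁ μ₂ : Measure Seq3, μ₁ ≠ μ₂ ∧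
      (IsProbabilityMeasure μ₁ ∧ MeasurePreserving shift μ₁ μ₁ ∧ Ergodic shift μ₁ ∧
        μ₁ (orbitClosure Iα) = 1) ∧
      (IsProbabilityMeasure μ₂ ∧ MeasurePreserving shift μ₂ μ₂ ∧ Ergodic shift μ₂ ∧
        μ₂ (orbitClosure Iα) = 1) ∧
      (∀ μ : Measure Seq3, IsProbabilityMeasure μ → Ergodic shift μ →
        μ (orbitClosure Iα) = 1 → μ = μ₁ ∨ μ = μ₂) ∧
      (∫ x, kappa x ∂μ₁) ≠ (∫ x, kappa x ∂μ₂) ∧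
      DFMZ (orbitClosure Iα) = segment ℝ (∫ x, kappa x ∂μ₁) (∫ x, kappa x ∂μ₂) ∧
      segment ℝ (∫ x, kappa x ∂μ₁) (∫ x, kappa x ∂μ₂) =
        {α' | α' ∈ Delta' ∧ IsInfimax α' Iα} ∧
      (∃ s ∈ orbitClosure Iα, ∃ v, hasFreq s v ∧ v ≠ (∫ x, kappa x ∂μ₁)) ∧
      (∃ s ∈ orbitClosure Iα, ∃ v, hasFreq s v ∧ v ≠ (∫ x, kappa x ∂μ₂)) := by
  obtain ⟨α', hα', hne, hI'⟩ := hexc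
  obtain ⟨n, hn_α⟩ := Infimax.exists_mem_itinerarySet hα
  obtain ⟨n', hn_α'⟩ := Infimax.exists_mem_itinerarySet hα'
  obtain rfl := Infimax.itinerary_eq_of_isInfimax hn_α hn_α' hI hI'
  have hn := Infimax.nonzeroAtBothParities_of_ne hn_α' hn_α hne
  have hJ := Infimax.hasPrefix_iterBlock_of_isInfimax hn_α hI
  obtain ⟨p, q, hpq, hseg⟩ := Infimax.exists_itinerarySet_eq_segment hn_α' hn_α hne
  have himage := Infimax.image_integral_kappa_eq_segment hn hJ hpq hseg
  obtain ⟨μ₁, hμ₁, rfl⟩ := himage.ge (left_mem_segment ℝ p q)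
  obtain ⟨μ₂, hμ₂, rfl⟩ := himage.ge (right_mem_segment ℝ _ q)
  have hergodic {μ : Measure Seq3} :=
    Infimax.ergodic_iff_integral_kappa_eq_or_eq hn hJ hpq hseg (μ := μ)
  have hfreq {v : Fin 3 → ℝ} := Infimax.exists_hasFreq_of_mem_pair hn hJ hpq hseg (v := v)
  obtain ⟨s₁, hs₁, hfreq₁⟩ := hfreq (.inl rfl)
  obtain ⟨s₂, hs₂, hfreq₂⟩ := hfreq (.inr rfl)
  refine ⟨μ₁, μ₂, fun h => hpq (h ▸ rfl),
    ⟨hμ₁.1, hμ₁.2, (hergodic hμ₁).2 (.inl rfl), hμ₁.3⟩,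
    ⟨hμ₂.1, hμ₂.2, (hergodic hμ₂).2 (.inr rfl), hμ₂.3⟩, fun μ hprob hμ hX => ?_, hpq,
    (Infimax.DFMZ_orbitClosure_eq_itinerarySet hn hJ hpq hseg).trans hseg,
    hseg.symm.trans (Infimax.setOf_isInfimax_eq_itinerarySet hn_α hn hI).symm,
    ⟨s₂, hs₂, _, hfreq₂, hpq.symm⟩, ⟨s₁, hs₁, _, hfreq₁, hpq⟩⟩
  have hinv : Infimax.IsInvariantOn shift _ μ := ⟨hprob, hμ.toMeasurePreserving, hX⟩
  exact ((hergodic hinv).1 hμ).imp (Infimax.injOn_integral_kappa hn hJ hinv hμ₁)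
    (Infimax.injOn_integral_kappa hn hJ hinv hμ₂)
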